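/- arXiv:1402.2242 — 2 statements merged into one kernel-verified Lean document; each statement's English description precedes it below -/
import Mathlib

section
/- For every p ∈ ℕ one has E[|w + Z|^{2p}] = ∑_{ℓ=0}^{p} [(2p−2+ν)!! / (2(p−ℓ)−2+ν)!!] · (p choose ℓ) · |w|^{2(p−ℓ)} σ^{2ℓ}, where |·| denotes the Euclidean norm on ℝ^ν. -/
open MeasureTheory ProbabilityTheory

/-- Double factorial with integer argument, using the conventions
`(2j)‼ = 2^j j!`, `(2j+1)‼ = (2j+1)!/(2j)‼` for `j ∈ ℕ₀` and `(−1)‼ = 1`. -/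
noncomputable def dfacZ (n : ℤ) : ℝ :=
  if n < 0 then 1 else (Nat.doubleFactorial n.toNat : ℝ)

/-!
Let `X` be Gaussian with mean `w` and covariance `t • 1` on `ℝⁿ`, and put `Aₚ = E[|X|²ᵖ]` and
`Bₚ = E[⟨w, X⟩ |X|²ᵖ]`. Gaussian integration by parts `E[Xᵢ q(X)] = wᵢ E[q(X)] + t E[∂ᵢq(X)]`,
applied to `q = Xᵢ |X|²ᵖ` and to `q = |X|²ᵖ⁺²`, gives
`Aₚ₊₁ = Bₚ + t (2p + n) Aₚ` and `Bₚ₊₁ = |w|² Aₚ₊₁ + 2 (p + 1) t Bₚ`.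
The claimed sum, as a function of `n`, is a Laguerre polynomial `Mₚ(n)`, and its two classical
contiguous relations say that `Aₚ = Mₚ(n)`, `Bₚ = |w|² Mₚ(n + 2)` solve this system.
-/

section Laguerre

open Finset

variable {R : Type*} [CommSemiring R]

/-- The Pochhammer 2-symbol `b (b + 2) ⋯ (b + 2 (n - 1))`, which expresses the ratio of two double
factorials of the same parity. -/
def pochhammerTwo (b : R) (n : ℕ) : R := ∏ j ∈ range n, (b + 2 * j)

theorem pochhammerTwo_zero (b : R) : pochhammerTwo b 0 = 1 :=
  prod_range_zero _

theorem pochhammerTwo_succ (b : R) (n : ℕ) :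
    pochhammerTwo b (n + 1) = pochhammerTwo b n * (b + 2 * n) :=
  prod_range_succ _ _

theorem pochhammerTwo_succ_left (b : R) (n : ℕ) :
    pochhammerTwo b (n + 1) = b * pochhammerTwo (b + 2) n := by
  rw [pochhammerTwo, prod_range_succ', mul_comm, pochhammerTwo, Nat.cast_zero, mul_zero, add_zero]
  refine congrArg (b * ·) (prod_congr rfl fun j _ => ?_)
  push_cast
  ring

theorem pochhammerTwo_add_two_succ (b : R) (n : ℕ) :
    pochhammerTwo (b + 2) (n + 1) =
      pochhammerTwo b (n + 1) + 2 * (n + 1) * pochhammerTwo (b + 2) n := by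
  rw [pochhammerTwo_succ, pochhammerTwo_succ_left b]
  ring

/-- The homogenized generalized Laguerre polynomial of degree `p` in `s` and `t`, normalized to be
monic in `s`: over a field of characteristic zero it is `(2t)ᵖ p! L_p^{(a/2-1)}(-s/(2t))`. It is
the `2p`-th moment of the norm of a Gaussian vector in dimension `a`, with squared norm of the mean
`s` and variance `t`. -/
def homLaguerre (a s t : R) (p : ℕ) : R :=
  ∑ ij ∈ antidiagonal p,
    p.choose ij.1 * (pochhammerTwo (a + 2 * ij.2) ij.1 * s ^ ij.2 * t ^ ij.1)

theorem homLaguerre_zero (a s t : R) : homLaguerre a s t 0 = 1 := by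
  simp [homLaguerre, pochhammerTwo_zero]

theorem homLaguerre_succ (a s t : R) (p : ℕ) :
    homLaguerre a s t (p + 1) =
      s * homLaguerre (a + 2) s t p + t * (2 * p + a) * homLaguerre a s t p := by
  rw [homLaguerre, sum_antidiagonal_choose_succ_mul
    fun i j => pochhammerTwo (a + 2 * j) i * s ^ j * t ^ i, homLaguerre, homLaguerre,
    mul_sum, mul_sum]
  congr 1 <;> refine sum_congr rfl fun ij hij => ?_
  · rw [show a + 2 * ((ij.2 + 1 : ℕ) : R) = a + 2 + 2 * ij.2 by push_cast; ring]
    ring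
  · obtain rfl := mem_antidiagonal.1 hij
    rw [pochhammerTwo_succ, Nat.choose_symm_add]
    push_cast
    ring

theorem homLaguerre_add_two_succ (a s t : R) (p : ℕ) :
    homLaguerre (a + 2) s t (p + 1) =
      homLaguerre a s t (p + 1) + 2 * (p + 1) * t * homLaguerre (a + 2) s t p := by
  simp only [homLaguerre, Nat.sum_antidiagonal_succ, pochhammerTwo_zero, mul_sum]
  rw [add_assoc (_ * _), ← sum_add_distrib]
  refine congrArg (_ + ·) (sum_congr rfl fun ij _ => ?_)
  have absorb : ((p + 1).choose (ij.1 + 1) : R) * (ij.1 + 1) = (p + 1) * p.choose ij.1 := by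
    simpa only [Nat.cast_mul, Nat.cast_succ] using
      congrArg (Nat.cast (R := R)) (Nat.add_one_mul_choose_eq p ij.1).symm
  rw [add_right_comm, pochhammerTwo_add_two_succ]
  set b := a + 2 * (ij.2 : R)
  calc ((p + 1).choose (ij.1 + 1) : R) * ((pochhammerTwo b (ij.1 + 1) +
          2 * (ij.1 + 1) * pochhammerTwo (b + 2) ij.1) * s ^ ij.2 * t ^ (ij.1 + 1))
      = (p + 1).choose (ij.1 + 1) * (pochhammerTwo b (ij.1 + 1) * s ^ ij.2 * t ^ (ij.1 + 1)) +
          2 * t * ((p + 1).choose (ij.1 + 1) * (ij.1 + 1)) *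
            (pochhammerTwo (b + 2) ij.1 * s ^ ij.2 * t ^ ij.1) := by ring
    _ = _ := by rw [absorb]; ring

end Laguerre

section DoubleFactorial

theorem dfacZ_pos (n : ℤ) : 0 < dfacZ n := by
  unfold dfacZ
  split_ifs
  · exact one_pos
  · exact_mod_cast Nat.doubleFactorial_pos _

theorem dfacZ_add_two {n : ℤ} (hn : -1 ≤ n) : dfacZ (n + 2) = dfacZ n * (n + 2) := by
  obtain rfl | hn := hn.eq_or_lt
  · norm_num [dfacZ]
  · lift n to ℕ using by omega
    simp only [dfacZ, Int.natCast_nonneg, not_lt.2, if_false, Int.toNat_natCast,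
      show ¬ ((n : ℤ) + 2 < 0) by omega, show ((n : ℤ) + 2).toNat = n + 2 by omega,
      Nat.doubleFactorial_add_two]
    push_cast
    ring

theorem dfacZ_add_two_mul {n : ℤ} (hn : -1 ≤ n) (k : ℕ) :
    dfacZ (n + 2 * k) = dfacZ n * pochhammerTwo ((n : ℝ) + 2) k := by
  induction k with
  | zero => simp [pochhammerTwo_zero]
  | succ k ih =>
    rw [show n + 2 * ((k + 1 : ℕ) : ℤ) = n + 2 * k + 2 by push_cast; ring,
      dfacZ_add_two (by omega), ih, pochhammerTwo_succ]
    push_cast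
    ring

theorem dfacZ_div_dfacZ {n : ℕ} (hn : 0 < n) (p : ℕ) {l : ℕ} (hl : l ≤ p) :
    dfacZ (2 * p - 2 + n) / dfacZ (2 * (p - l) - 2 + n) =
      pochhammerTwo ((n : ℝ) + 2 * (p - l : ℕ)) l := by
  obtain ⟨k, rfl⟩ := Nat.exists_eq_add_of_le' hl
  have lower : (2 * (((k + l : ℕ) : ℤ) - l) - 2 + n) = 2 * k - 2 + n := by push_cast; ring
  have upper : (2 * ((k + l : ℕ) : ℤ) - 2 + n) = 2 * k - 2 + n + 2 * l := by push_cast; ring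
  rw [lower, upper, dfacZ_add_two_mul (by omega), mul_div_cancel_left₀ _ (dfacZ_pos _).ne',
    Nat.add_sub_cancel]
  push_cast
  ring_nf

theorem homLaguerre_natCast_eq_sum_dfacZ {n : ℕ} (hn : 0 < n) (s t : ℝ) (p : ℕ) :
    homLaguerre (n : ℝ) s t p = ∑ l ∈ Finset.range (p + 1),
      dfacZ (2 * p - 2 + n) / dfacZ (2 * (p - l) - 2 + n) * p.choose l * s ^ (p - l) * t ^ l := by
  rw [homLaguerre, Finset.Nat.sum_antidiagonal_eq_sum_range_succ_mk]
  refine Finset.sum_congr rfl fun l hl => ?_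
  rw [dfacZ_div_dfacZ hn p (Finset.mem_range_succ_iff.1 hl)]
  ring

end DoubleFactorial

section SteinFunctional

open MvPolynomial

variable {ι R : Type*} [CommSemiring R]

/-- A linear functional on polynomials satisfying Gaussian integration by parts with means `m i` and
variances `v i`. It retains all that the moment computation needs to know about the Gaussian law. -/
def IsSteinFunctional (L : MvPolynomial ι R →ₗ[R] R) (m v : ι → R) : Prop :=
  ∀ i q, L (X i * q) = m i * L q + v i * L (pderiv i q)

variable [Fintype ι]

theorem pderiv_psum_two_pow_succ (i : ι) (p : ℕ) :
    pderiv i (psum ι R 2 ^ (p + 1)) = (2 * (p + 1) : R) • (X i * psum ι R 2 ^ p) := by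
  classical
  have pderiv_psum : pderiv i (psum ι R 2) = 2 * X i := by
    simp [psum, pderiv_X, Pi.single_apply]
  rw [pderiv_pow, pderiv_psum, smul_eq_C_mul]
  simp only [map_mul, map_add, map_ofNat, map_natCast, map_one, Nat.add_sub_cancel]
  push_cast
  ring

theorem sum_pderiv_X_mul_psum_two_pow (p : ℕ) :
    ∑ i, pderiv i (X i * psum ι R 2 ^ p) =
      (2 * p + Fintype.card ι : R) • psum ι R 2 ^ p := by
  simp only [pderiv_mul, pderiv_X_self, one_mul, Finset.sum_add_distrib, Finset.sum_const,
    Finset.card_univ]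
  rw [add_smul, add_comm, Nat.cast_smul_eq_nsmul]
  congr 1
  cases p with
  | zero => simp
  | succ p =>
    simp only [pderiv_psum_two_pow_succ, mul_smul_comm, ← Finset.smul_sum, ← mul_assoc, ← sq,
      ← Finset.sum_mul]
    rw [← psum, ← pow_succ']
    push_cast
    rfl

variable {L : MvPolynomial ι R →ₗ[R] R} {m : ι → R} {t : R}

namespace IsSteinFunctional

theorem map_psum_two_pow_succ
    (hL : IsSteinFunctional L m fun _ => t) (p : ℕ) :
    L (psum ι R 2 ^ (p + 1)) =
      ∑ i, m i * L (X i * psum ι R 2 ^ p) +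
        t * (2 * p + Fintype.card ι) * L (psum ι R 2 ^ p) := by
  calc L (psum ι R 2 ^ (p + 1))
      = ∑ i, L (X i * (X i * psum ι R 2 ^ p)) := by
        rw [pow_succ', psum, Finset.sum_mul, map_sum]
        simp only [sq, mul_assoc]
    _ = ∑ i, m i * L (X i * psum ι R 2 ^ p) +
          t * L (∑ i, pderiv i (X i * psum ι R 2 ^ p)) := by
        simp only [hL _ (X _ * _), Finset.sum_add_distrib, Finset.mul_sum, map_sum]
    _ = _ := by rw [sum_pderiv_X_mul_psum_two_pow, map_smul, smul_eq_mul, mul_assoc]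

theorem sum_mul_map_X_mul_psum_two_pow_succ
    (hL : IsSteinFunctional L m fun _ => t) (p : ℕ) :
    ∑ i, m i * L (X i * psum ι R 2 ^ (p + 1)) =
      (∑ i, m i ^ 2) * L (psum ι R 2 ^ (p + 1)) +
        2 * (p + 1) * t * ∑ i, m i * L (X i * psum ι R 2 ^ p) := by
  rw [Finset.sum_mul, Finset.mul_sum, ← Finset.sum_add_distrib]
  refine Finset.sum_congr rfl fun i _ => ?_
  rw [hL, pderiv_psum_two_pow_succ, map_smul, smul_eq_mul]
  ring

theorem map_psum_two_pow_and_sum_mul_map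
    (hL : IsSteinFunctional L m fun _ => t) (hL1 : L 1 = 1) (p : ℕ) :
    L (psum ι R 2 ^ p) = homLaguerre (Fintype.card ι : R) (∑ i, m i ^ 2) t p ∧
      ∑ i, m i * L (X i * psum ι R 2 ^ p) =
        (∑ i, m i ^ 2) * homLaguerre (Fintype.card ι + 2 : R) (∑ i, m i ^ 2) t p := by
  induction p with
  | zero =>
    have map_X (i : ι) : L (X i) = m i := by simpa [hL1] using hL i 1
    simp [homLaguerre_zero, hL1, map_X, sq]
  | succ p ih =>
    obtain ⟨ih_psum, ih_tilted⟩ := ih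
    have psum_succ : L (psum ι R 2 ^ (p + 1)) =
        homLaguerre (Fintype.card ι : R) (∑ i, m i ^ 2) t (p + 1) := by
      rw [hL.map_psum_two_pow_succ, ih_psum, ih_tilted, homLaguerre_succ]
    refine ⟨psum_succ, ?_⟩
    rw [hL.sum_mul_map_X_mul_psum_two_pow_succ, psum_succ, ih_tilted,
      homLaguerre_add_two_succ]
    ring

end IsSteinFunctional

end SteinFunctional

section Gaussian

open MvPolynomial
open scoped NNReal

theorem hasDerivAt_gaussianPDFReal (m : ℝ) {v : ℝ≥0} (hv : v ≠ 0) (x : ℝ) :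
    HasDerivAt (gaussianPDFReal m v) (-((x - m) / v) * gaussianPDFReal m v x) x := by
  have hv' : (v : ℝ) ≠ 0 := NNReal.coe_ne_zero.2 hv
  have exponent : HasDerivAt (fun x => -(x - m) ^ 2 / (2 * v)) (-((x - m) / v)) x := by
    refine ((((hasDerivAt_id' x).sub_const m).pow 2).neg.div_const (2 * (v : ℝ))).congr_deriv ?_
    field_simp
    push_cast
    ring
  rw [gaussianPDFReal_def]
  exact (exponent.exp.const_mul _).congr_deriv (by ring)

theorem integrable_gaussianReal_iff_integrable_smul {E : Type*} [NormedAddCommGroup E]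
    [NormedSpace ℝ E] (m : ℝ) {v : ℝ≥0} (hv : v ≠ 0) {f : ℝ → E} :
    Integrable f (gaussianReal m v) ↔ Integrable fun x => gaussianPDFReal m v x • f x := by
  rw [gaussianReal_of_var_ne_zero _ hv, integrable_withDensity_iff_integrable_smul₀'
    (by fun_prop) (by simp [gaussianPDF_lt_top])]
  simp only [toReal_gaussianPDF]

/-- **Stein's identity**: integrate the derivative of the density times `f`. -/
theorem integral_sub_mul_gaussianReal (m : ℝ) (v : ℝ≥0) {f f' : ℝ → ℝ}
    (hderiv : ∀ x, HasDerivAt f (f' x) x) (hf : Integrable f (gaussianReal m v))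
    (hxf : Integrable (fun x => (x - m) * f x) (gaussianReal m v))
    (hf' : Integrable f' (gaussianReal m v)) :
    ∫ x, (x - m) * f x ∂gaussianReal m v = v * ∫ x, f' x ∂gaussianReal m v := by
  obtain rfl | hv := eq_or_ne v 0
  · simp
  have hv' : (v : ℝ) ≠ 0 := NNReal.coe_ne_zero.2 hv
  simp only [integrable_gaussianReal_iff_integrable_smul m hv, smul_eq_mul] at hf hxf hf'
  have hderiv_mul (x : ℝ) : HasDerivAt (fun x => gaussianPDFReal m v x * f x)
      (gaussianPDFReal m v x * f' x - (v : ℝ)⁻¹ * (gaussianPDFReal m v x * ((x - m) * f x))) x :=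
    ((hasDerivAt_gaussianPDFReal m hv x).mul (hderiv x)).congr_deriv (by ring)
  have integral_deriv :=
    integral_eq_zero_of_hasDerivAt_of_integrable hderiv_mul (hf'.sub (hxf.const_mul _)) hf
  rw [integral_sub hf' (hxf.const_mul _), integral_const_mul, sub_eq_zero] at integral_deriv
  simp only [integral_gaussianReal_eq_integral_smul hv, smul_eq_mul]
  rw [integral_deriv, mul_inv_cancel_left₀ hv']

theorem integrable_pow_gaussianReal (m : ℝ) (v : ℝ≥0) (n : ℕ) :
    Integrable (fun x => x ^ n) (gaussianReal m v) := by
  refine (integrable_norm_iff (by fun_prop)).1 ?_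
  simpa using (memLp_id_gaussianReal' (μ := m) (v := v) n (by simp)).integrable_norm_pow'

theorem integral_pow_succ_gaussianReal (m : ℝ) (v : ℝ≥0) (n : ℕ) :
    ∫ x, x ^ (n + 1) ∂gaussianReal m v =
      m * ∫ x, x ^ n ∂gaussianReal m v + v * (n * ∫ x, x ^ (n - 1) ∂gaussianReal m v) := by
  have hpow := integrable_pow_gaussianReal m v
  have sub_mul_pow (x : ℝ) : (x - m) * x ^ n = x ^ (n + 1) - m * x ^ n := by ring
  have stein := integral_sub_mul_gaussianReal m v (hasDerivAt_pow n) (hpow n)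
    (by simp only [sub_mul_pow]; exact (hpow (n + 1)).sub ((hpow n).const_mul m))
    ((hpow (n - 1)).const_mul n)
  simp only [sub_mul_pow] at stein
  rw [integral_sub (hpow _) ((hpow _).const_mul _), integral_const_mul, integral_const_mul] at stein
  linarith

variable {ι : Type*} [Fintype ι]

theorem eval_monomial_eq_mul_prod (x : ι → ℝ) (s : ι →₀ ℕ) (a : ℝ) :
    eval x (monomial s a) = a * ∏ i, x i ^ s i := by
  rw [eval_monomial, Finsupp.prod_fintype _ _ fun _ => pow_zero _]

theorem integrable_eval_pi {μ : ι → Measure ℝ} [∀ i, SigmaFinite (μ i)]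
    (hμ : ∀ i n, Integrable (fun x => x ^ n) (μ i)) (q : MvPolynomial ι ℝ) :
    Integrable (fun x => eval x q) (Measure.pi μ) := by
  induction q using MvPolynomial.induction_on' with
  | monomial s a =>
    simp only [eval_monomial_eq_mul_prod]
    exact (Integrable.fintype_prod fun i => hμ i (s i)).const_mul a
  | add q r hq hr => simpa only [map_add] using hq.fun_add hr

theorem integrable_eval_pi_gaussianReal (m : ι → ℝ) (v : ι → ℝ≥0) (q : MvPolynomial ι ℝ) :
    Integrable (fun x => eval x q) (Measure.pi fun i => gaussianReal (m i) (v i)) :=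
  integrable_eval_pi (fun i => integrable_pow_gaussianReal (m i) (v i)) q

/-- The expectation of a polynomial in independent Gaussian variables of means `m i` and variances
`v i`, bundled as a linear functional so that it can be manipulated algebraically. -/
noncomputable def gaussianExpectation (m : ι → ℝ) (v : ι → ℝ≥0) : MvPolynomial ι ℝ →ₗ[ℝ] ℝ where
  toFun q := ∫ x, eval x q ∂Measure.pi fun i => gaussianReal (m i) (v i)
  map_add' q r := by
    simp only [map_add]
    exact integral_add (integrable_eval_pi_gaussianReal m v q)
      (integrable_eval_pi_gaussianReal m v r)
  map_smul' c q := by simp only [smul_eval, integral_const_mul, RingHom.id_apply, smul_eq_mul]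

theorem gaussianExpectation_apply (m : ι → ℝ) (v : ι → ℝ≥0) (q : MvPolynomial ι ℝ) :
    gaussianExpectation m v q = ∫ x, eval x q ∂Measure.pi fun i => gaussianReal (m i) (v i) :=
  rfl

theorem gaussianExpectation_monomial (m : ι → ℝ) (v : ι → ℝ≥0) (s : ι →₀ ℕ) (a : ℝ) :
    gaussianExpectation m v (monomial s a) =
      a * ∏ i, ∫ x, x ^ s i ∂gaussianReal (m i) (v i) := by
  simp only [gaussianExpectation_apply, eval_monomial_eq_mul_prod, integral_const_mul]
  rw [integral_fintype_prod_eq_prod fun i x => x ^ s i]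

theorem gaussianExpectation_one (m : ι → ℝ) (v : ι → ℝ≥0) : gaussianExpectation m v 1 = 1 := by
  simp [gaussianExpectation_apply]

theorem isSteinFunctional_gaussianExpectation (m : ι → ℝ) (v : ι → ℝ≥0) :
    IsSteinFunctional (gaussianExpectation m v) m fun i => (v i : ℝ) := by
  classical
  intro i q
  induction q using MvPolynomial.induction_on' with
  | monomial s a =>
    have prod_erase (s' : ι →₀ ℕ) (hs' : ∀ j ≠ i, s' j = s j) :
        ∏ j, ∫ x, x ^ s' j ∂gaussianReal (m j) (v j) =
          (∫ x, x ^ s' i ∂gaussianReal (m i) (v i)) *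
            ∏ j ∈ Finset.univ.erase i, ∫ x, x ^ s j ∂gaussianReal (m j) (v j) := by
      rw [← Finset.mul_prod_erase _ _ (Finset.mem_univ i)]
      refine congrArg _ (Finset.prod_congr rfl fun j hj => ?_)
      rw [hs' j (Finset.ne_of_mem_erase hj)]
    rw [← pow_one (X i), ← monomial_single_add, pderiv_monomial, gaussianExpectation_monomial,
      gaussianExpectation_monomial, gaussianExpectation_monomial, prod_erase s fun _ _ => rfl,
      prod_erase _ fun j hj => by simp [hj.symm], prod_erase _ fun j hj => by simp [hj.symm]]
    simp only [Finsupp.add_apply, Finsupp.tsub_apply, Finsupp.single_eq_same, add_comm 1]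
    rw [integral_pow_succ_gaussianReal]
    ring
  | add q r hq hr =>
    simp only [mul_add, map_add, hq, hr]
    ring

theorem integral_sum_sq_pow_pi_gaussianReal (m : ι → ℝ) (v : ℝ≥0) (p : ℕ) :
    ∫ x, (∑ i, x i ^ 2) ^ p ∂(Measure.pi fun i => gaussianReal (m i) v) =
      homLaguerre (Fintype.card ι : ℝ) (∑ i, m i ^ 2) v p := by
  have moments := ((isSteinFunctional_gaussianExpectation m fun _ => v)
    |>.map_psum_two_pow_and_sum_mul_map (gaussianExpectation_one m _) p).1
  simpa [gaussianExpectation_apply, psum] using moments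

variable {Ω : Type*} [MeasurableSpace Ω] {P : Measure Ω} {Z : Ω → ι → ℝ}

theorem hasLaw_const_add_pi_gaussianReal {m : ι → ℝ} {v : ι → ℝ≥0} (w : ι → ℝ)
    (hZ : HasLaw Z (Measure.pi fun i => gaussianReal (m i) (v i)) P) :
    HasLaw (fun ω i => w i + Z ω i) (Measure.pi fun i => gaussianReal (m i + w i) (v i)) P :=
  (measurePreserving_pi _ _ fun i => ⟨measurable_const_add (w i),
    gaussianReal_map_const_add (w i)⟩).fun_comp_hasLaw hZ

theorem statement7_general [Nonempty ι] {σ : ℝ≥0} (w : ι → ℝ)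
    (hZ : HasLaw Z (Measure.pi fun _ => gaussianReal 0 (σ ^ 2)) P) (p : ℕ) :
    ∫ ω, (∑ i, (w i + Z ω i) ^ 2) ^ p ∂P =
      ∑ l ∈ Finset.range (p + 1),
        dfacZ (2 * p - 2 + Fintype.card ι) / dfacZ (2 * (p - l) - 2 + Fintype.card ι) *
          p.choose l * (∑ i, w i ^ 2) ^ (p - l) * (σ : ℝ) ^ (2 * l) := by
  have law := hasLaw_const_add_pi_gaussianReal w hZ
  calc ∫ ω, (∑ i, (w i + Z ω i) ^ 2) ^ p ∂P
      = ∫ x, (∑ i, x i ^ 2) ^ p ∂(Measure.pi fun i => gaussianReal (w i) (σ ^ 2)) := by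
        simp only [zero_add] at law
        exact law.integral_comp (f := fun x => (∑ i, x i ^ 2) ^ p)
          (Continuous.aestronglyMeasurable (by fun_prop))
    _ = homLaguerre (Fintype.card ι : ℝ) (∑ i, w i ^ 2) ((σ ^ 2 : ℝ≥0) : ℝ) p :=
        integral_sum_sq_pow_pi_gaussianReal w (σ ^ 2) p
    _ = _ := by
        rw [homLaguerre_natCast_eq_sum_dfacZ Fintype.card_pos]
        simp only [NNReal.coe_pow, ← pow_mul]

end Gaussian

/-- If `Z` is an `ℝ^ν`-valued random vector whose `ν` components are
independent centered Gaussians of variance `σ²` (i.e. `Z` has law `N(0, σ²·Id)`), then for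
every `p ∈ ℕ`, `E[|w + Z|^{2p}] = ∑_{ℓ=0}^{p} ((2p−2+ν)‼/(2(p−ℓ)−2+ν)‼) (p choose ℓ)
|w|^{2(p−ℓ)} σ^{2ℓ}`, with `|·|` the Euclidean norm (so `|w+Z|^{2p} = (∑ᵢ (wᵢ+Zᵢ)²)^p`). -/
theorem statement7 {Ω : Type*} [MeasurableSpace Ω] (P : Measure Ω) [IsProbabilityMeasure P]
    (ν : ℕ) (hν : 0 < ν) (σ : NNReal) (hσ : 0 < σ) (w : Fin ν → ℝ)
    (Z : Ω → Fin ν → ℝ) (hZmeas : Measurable Z)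
    (hZlaw : Measure.map Z P = Measure.pi fun _ : Fin ν => gaussianReal 0 (σ ^ 2))
    (p : ℕ) (hp : 0 < p) :
    ∫ ω, (∑ i, (w i + Z ω i) ^ 2) ^ p ∂P =
      ∑ ℓ ∈ Finset.range (p + 1),
        (dfacZ (2 * (p : ℤ) - 2 + (ν : ℤ)) / dfacZ (2 * ((p : ℤ) - (ℓ : ℤ)) - 2 + (ν : ℤ))) *
          (p.choose ℓ : ℝ) * (∑ i, w i ^ 2) ^ (p - ℓ) * (σ : ℝ) ^ (2 * ℓ) := by
  simpa only [Fintype.card_fin] using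
    haveI : Nonempty (Fin ν) := ⟨⟨0, hν⟩⟩
    statement7_general w ⟨hZmeas.aemeasurable, hZlaw⟩ p
end

section
/- For all p ∈ ℕ and t ∈ [0,T) one has the explicit moment formula E[|Y_t|^{2p}] = ∑_{ℓ=0}^{p} [(2p−2+ν)!! / (2(p−ℓ)−2+ν)!!] · (p choose ℓ) · (E[|q−y|^{2(p−ℓ)}]/T^{2(p−ℓ)}) · t^ℓ/(T^ℓ (T−t)^ℓ). -/
open MeasureTheory ProbabilityTheory

/-- A `ν`-dimensional Brownian motion `B` on a filtered probability space
`(Ω, m, (ℱ_t), P)` satisfying the usual conditions: the filtration is complete and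
right-continuous, `B` has continuous paths on `[0,∞)` with `B_0 = 0`, `B` is adapted, and
for `0 ≤ s ≤ t` the increment `B_t − B_s` is independent of `ℱ_s` and is a centered
Gaussian vector with covariance matrix `(t−s)·Id` (componentwise iid `N(0, t−s)`). -/
structure IsBrownianMotion {Ω : Type*} [m : MeasurableSpace Ω] (P : Measure Ω) (ν : ℕ)
    (F : Filtration ℝ m) (B : ℝ → Ω → Fin ν → ℝ) : Prop where
  complete : ∀ (t : ℝ) (A : Set Ω), P A = 0 → MeasurableSet[F t] A
  rightCont : ∀ t : ℝ, (F t : MeasurableSpace Ω) = ⨅ s ∈ Set.Ioi t, (F s : MeasurableSpace Ω)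
  contPaths : ∀ ω : Ω, ContinuousOn (fun t => B t ω) (Set.Ici 0)
  start : ∀ ω : Ω, B 0 ω = 0
  adapted : ∀ t : ℝ, Measurable[F t] (B t)
  indepIncr : ∀ s t : ℝ, 0 ≤ s → s ≤ t →
    Indep (MeasurableSpace.comap (fun ω => B t ω - B s ω) inferInstance) (F s) P
  gaussIncr : ∀ s t : ℝ, 0 ≤ s → s ≤ t →
    Measure.map (fun ω => B t ω - B s ω) P =
      Measure.pi fun _ : Fin ν => gaussianReal 0 (Real.toNNReal (t - s))

/-- The Brownian bridge from `q` to `y` in time `T` driven by the path `B`: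
`b_t = (t/T)y + ((T−t)/T)q + B_t − (T−t)∫₀ᵗ (T−s)⁻² B_s ds` for `t < T`, and `b_t = y`
otherwise (in particular `b_T = y`). -/
noncomputable def bridgeBB (ν : ℕ) (T : ℝ) (q y : Fin ν → ℝ) (B : ℝ → Fin ν → ℝ)
    (t : ℝ) : Fin ν → ℝ :=
  if t < T then
    (t / T) • y + ((T - t) / T) • q + B t -
      (T - t) • ∫ s in (0 : ℝ)..t, ((T - s) ^ 2)⁻¹ • B s
  else y

/-!
Integration by parts turns the drift into `Y_t = (y - q) / T - ∫₀ᵗ (T - s)⁻¹ dB_s`. The Wiener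
integral is independent of `𝔉₀`, hence of `q`, and its coordinates are independent centered
Gaussians of variance `∫₀ᵗ (T - s)⁻² ds = t / (T (T - t))`. So, given `q`, `|Y_t|²` is a
scaled noncentral chi-square variable, and its moments satisfy a recursion that comes from Stein's
identity `E[Z f(Z)] = x E[f(Z)] + v E[f'(Z)]` for `Z ∼ N(x, v)`.
-/

namespace BridgeDrift

open Finset Filter Topology
open scoped NNReal

section NoncentralMoment

variable {R : Type*} [CommRing R]

/-- The rising factorial with step two, `x (x + 2) ⋯ (x + 2 (ℓ - 1))`: the ratio of the double
factorials `(x - 2 + 2ℓ)‼` and `(x - 2)‼`. -/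
def stepTwoFactorial (x : R) (ℓ : ℕ) : R := ∏ i ∈ range ℓ, (x + 2 * i)

@[simp]
lemma stepTwoFactorial_zero (x : R) : stepTwoFactorial x 0 = 1 := prod_range_zero _

lemma stepTwoFactorial_succ (x : R) (ℓ : ℕ) :
    stepTwoFactorial x (ℓ + 1) = stepTwoFactorial x ℓ * (x + 2 * ℓ) :=
  prod_range_succ _ _

lemma stepTwoFactorial_succ' (x : R) (ℓ : ℕ) :
    stepTwoFactorial x (ℓ + 1) = x * stepTwoFactorial (x + 2) ℓ := by
  rw [stepTwoFactorial, prod_range_succ', Nat.cast_zero, mul_zero, add_zero, mul_comm]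
  congr 1
  exact prod_congr rfl fun i _ => by push_cast; ring

lemma stepTwoFactorial_add_two_sub (x : R) (ℓ : ℕ) :
    stepTwoFactorial (x + 2) (ℓ + 1) - stepTwoFactorial x (ℓ + 1) =
      2 * (ℓ + 1) * stepTwoFactorial (x + 2) ℓ := by
  rw [stepTwoFactorial_succ, stepTwoFactorial_succ']
  ring

/-- The `p`-th moment of the squared norm of an `n`-dimensional Gaussian vector with covariance
`v • Id` whose mean has squared norm `a` (a scaled noncentral chi-square variable), as a polynomial
in `n`, `a` and `v`. -/
def noncentralChiSqMoment (n a v : R) (p : ℕ) : R :=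
  ∑ ij ∈ antidiagonal p,
    (p.choose ij.1) * (stepTwoFactorial (n + 2 * ij.1) ij.2 * a ^ ij.1 * v ^ ij.2)

@[simp]
lemma noncentralChiSqMoment_zero (n a v : R) : noncentralChiSqMoment n a v 0 = 1 := by
  simp [noncentralChiSqMoment]

lemma noncentralChiSqMoment_succ (n a v : R) (p : ℕ) :
    noncentralChiSqMoment n a v (p + 1) =
      a * noncentralChiSqMoment (n + 2) a v p +
        v * (n + 2 * p) * noncentralChiSqMoment n a v p := by
  unfold noncentralChiSqMoment
  rw [sum_antidiagonal_choose_succ_mul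
    (fun i j => stepTwoFactorial (n + 2 * i) j * a ^ i * v ^ j), add_comm, mul_sum, mul_sum]
  congr 1 <;> refine sum_congr rfl fun ij hij => ?_
  · rw [← Nat.choose_symm_of_eq_add (mem_antidiagonal.1 hij).symm]
    push_cast
    ring_nf
  · rw [stepTwoFactorial_succ, ← mem_antidiagonal.1 hij]
    push_cast
    ring

lemma noncentralChiSqMoment_add_two_succ (n a v : R) (p : ℕ) :
    noncentralChiSqMoment (n + 2) a v (p + 1) =
      noncentralChiSqMoment n a v (p + 1) +
        2 * (p + 1) * v * noncentralChiSqMoment (n + 2) a v p := by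
  rw [← sub_eq_iff_eq_add']
  simp only [noncentralChiSqMoment]
  rw [← sum_sub_distrib, Nat.sum_antidiagonal_succ']
  simp only [stepTwoFactorial_zero, sub_self, zero_add, mul_sum]
  refine sum_congr rfl fun ij hij => ?_
  have hchoose : ((p + 1).choose ij.1 : R) * (ij.2 + 1) = p.choose ij.1 * (p + 1) := by
    obtain rfl := mem_antidiagonal.1 hij
    have h := Nat.choose_mul_succ_eq (ij.1 + ij.2) ij.1
    rw [add_assoc, Nat.add_sub_cancel_left] at h
    simpa [add_assoc] using (congrArg (Nat.cast (R := R)) h).symm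
  have hdiff := stepTwoFactorial_add_two_sub (n + 2 * ij.1) ij.2
  rw [add_right_comm] at hdiff
  linear_combination ((p + 1).choose ij.1 : R) * a ^ ij.1 * v ^ (ij.2 + 1) * hdiff +
    2 * stepTwoFactorial (n + 2 + 2 * ij.1) ij.2 * a ^ ij.1 * v ^ (ij.2 + 1) * hchoose

end NoncentralMoment

section DoubleFactorial

lemma dfacZ_natCast (n : ℕ) : dfacZ n = n.doubleFactorial := by
  simp [dfacZ]

lemma dfacZ_add_two {m : ℤ} (hm : -1 ≤ m) : dfacZ (m + 2) = (m + 2) * dfacZ m := by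
  obtain rfl | hm := hm.eq_or_lt
  · norm_num [dfacZ]
  · lift m to ℕ using by omega
    have := dfacZ_natCast (m + 2)
    push_cast at this ⊢
    rw [this, dfacZ_natCast, Nat.doubleFactorial_add_two]
    push_cast
    ring

lemma dfacZ_ne_zero (m : ℤ) : dfacZ m ≠ 0 := by
  unfold dfacZ
  split_ifs
  exacts [one_ne_zero, Nat.cast_ne_zero.2 (Nat.doubleFactorial_pos _).ne']

lemma dfacZ_add_two_mul {m : ℤ} (hm : -1 ≤ m) (ℓ : ℕ) :
    dfacZ (m + 2 * ℓ) = stepTwoFactorial (m + 2 : ℝ) ℓ * dfacZ m := by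
  induction ℓ with
  | zero => simp
  | succ ℓ ih =>
    rw [Nat.cast_add_one, mul_add_one, ← add_assoc, dfacZ_add_two (by omega), ih,
      stepTwoFactorial_succ]
    push_cast
    ring

lemma dfacZ_div_dfacZ {ν : ℕ} (hν : 0 < ν) (i j : ℕ) :
    dfacZ (2 * (i + j) - 2 + ν) / dfacZ (2 * i - 2 + ν) = stepTwoFactorial (ν + 2 * i : ℝ) j := by
  rw [div_eq_iff (dfacZ_ne_zero _), show (2 * (i + j) - 2 + ν : ℤ) = 2 * i - 2 + ν + 2 * j by ring,
    dfacZ_add_two_mul (by omega)]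
  push_cast
  ring_nf

end DoubleFactorial

section GaussianReal

lemma hasDerivAt_gaussianPDFReal (x : ℝ) (v : ℝ≥0) (z : ℝ) :
    HasDerivAt (gaussianPDFReal x v) (gaussianPDFReal x v z * (-(z - x) / v)) z := by
  have hexponent : HasDerivAt (fun z : ℝ => -(z - x) ^ 2 / (2 * v)) (-(z - x) / v) z := by
    refine ((((hasDerivAt_id z).sub_const x).fun_pow 2).fun_neg.div_const
      (2 * (v : ℝ))).congr_deriv ?_
    simp only [id, Nat.cast_ofNat, Nat.add_one_sub_one, pow_one, mul_one]
    ring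
  rw [gaussianPDFReal_def]
  exact (hexponent.exp.const_mul (√(2 * Real.pi * v))⁻¹).congr_deriv (mul_assoc _ _ _).symm

lemma integrable_pow_gaussianReal (x : ℝ) (v : ℝ≥0) (n : ℕ) :
    Integrable (fun z : ℝ => z ^ n) (gaussianReal x v) := by
  refine (integrable_norm_iff (by fun_prop)).1 ?_
  simpa only [norm_pow, id] using
    (memLp_id_gaussianReal (μ := x) (v := v) n).integrable_norm_pow'

lemma integrable_gaussianPDFReal_mul_pow (x : ℝ) {v : ℝ≥0} (hv : v ≠ 0) (n : ℕ) :
    Integrable (fun z : ℝ => gaussianPDFReal x v z * z ^ n) := by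
  have h := integrable_pow_gaussianReal x v n
  rw [gaussianReal_of_var_ne_zero _ hv,
    integrable_withDensity_iff_integrable_smul' (measurable_gaussianPDF x v)
      (.of_forall fun _ => gaussianPDF_lt_top)] at h
  simpa only [toReal_gaussianPDF, smul_eq_mul] using h

/-- Integration by parts against the density `φ`, which satisfies `v φ'(z) = (x - z) φ(z)`. -/
lemma integral_pow_succ_gaussianReal (x : ℝ) (v : ℝ≥0) (n : ℕ) :
    ∫ z, z ^ (n + 1) ∂(gaussianReal x v) =
      x * ∫ z, z ^ n ∂(gaussianReal x v) +
        v * (n * ∫ z, z ^ (n - 1) ∂(gaussianReal x v)) := by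
  obtain rfl | hv := eq_or_ne v 0
  · simp [gaussianReal_zero_var, pow_succ']
  have hv' : (v : ℝ) ≠ 0 := mod_cast hv
  set φ := gaussianPDFReal x v
  have hderiv (z : ℝ) : HasDerivAt (fun z => φ z * z ^ n)
      ((v : ℝ)⁻¹ * (x * (φ z * z ^ n) + v * (n * (φ z * z ^ (n - 1))) - φ z * z ^ (n + 1))) z := by
    refine ((hasDerivAt_gaussianPDFReal x v z).mul (hasDerivAt_pow n z)).congr_deriv ?_
    field_simp
    ring
  have hint (k : ℕ) := integrable_gaussianPDFReal_mul_pow x hv k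
  have hzero := integral_eq_zero_of_hasDerivAt_of_integrable hderiv
    (((((hint n).const_mul x).add (((hint (n - 1)).const_mul n).const_mul v)).sub
      (hint (n + 1))).const_mul _) (hint n)
  rw [integral_const_mul, integral_sub, integral_add, integral_const_mul, integral_const_mul,
    integral_const_mul, mul_eq_zero_iff_left (inv_ne_zero hv'), sub_eq_zero] at hzero
  · simpa only [integral_gaussianReal_eq_integral_smul hv, smul_eq_mul] using hzero.symm
  · exact (hint n).const_mul x
  · exact ((hint (n - 1)).const_mul n).const_mul v
  · exact ((hint n).const_mul x).add (((hint (n - 1)).const_mul n).const_mul v)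
  · exact hint (n + 1)

end GaussianReal

section GaussianVector

open MvPolynomial

variable {ι : Type*} [Fintype ι] (x : ι → ℝ) (v : ι → ℝ≥0)

lemma integrable_eval_gaussianReal_pi (f : MvPolynomial ι ℝ) :
    Integrable (fun z => eval z f) (Measure.pi fun i => gaussianReal (x i) (v i)) := by
  induction f using MvPolynomial.induction_on' with
  | monomial u a =>
    simp only [eval_monomial, Finsupp.prod_fintype _ _ (fun _ => pow_zero _)]
    exact (Integrable.fintype_prod (f := fun i (z : ℝ) => z ^ u i)
      fun i => integrable_pow_gaussianReal (x i) (v i) (u i)).const_mul a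
  | add f g hf hg =>
    simp only [map_add]
    exact hf.add hg

/-- The expectation of a polynomial in independent `N(x i, v i)` variables, as a linear form on
polynomials. -/
noncomputable def gaussianExpectation : MvPolynomial ι ℝ →ₗ[ℝ] ℝ where
  toFun f := ∫ z, eval z f ∂(Measure.pi fun i => gaussianReal (x i) (v i))
  map_add' f g := by
    simp only [map_add]
    exact integral_add (integrable_eval_gaussianReal_pi x v f)
      (integrable_eval_gaussianReal_pi x v g)
  map_smul' c f := by
    simp only [smul_eval, RingHom.id_apply, smul_eq_mul, integral_const_mul]

lemma gaussianExpectation_apply (f : MvPolynomial ι ℝ) :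
    gaussianExpectation x v f =
      ∫ z, eval z f ∂(Measure.pi fun i => gaussianReal (x i) (v i)) := rfl

lemma gaussianExpectation_one : gaussianExpectation x v 1 = 1 := by
  simp [gaussianExpectation_apply]

lemma gaussianExpectation_monomial (u : ι →₀ ℕ) (a : ℝ) :
    gaussianExpectation x v (monomial u a) =
      a * ∏ i, ∫ z, z ^ u i ∂(gaussianReal (x i) (v i)) := by
  simp only [gaussianExpectation_apply, eval_monomial,
    Finsupp.prod_fintype _ _ (fun _ => pow_zero _), integral_const_mul]
  rw [integral_fintype_prod_eq_prod (𝕜 := ℝ) (fun i (z : ℝ) => z ^ u i)]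

lemma gaussianExpectation_X_mul (i : ι) (f : MvPolynomial ι ℝ) :
    gaussianExpectation x v (X i * f) =
      x i * gaussianExpectation x v f + v i * gaussianExpectation x v (pderiv i f) := by
  classical
  induction f using MvPolynomial.induction_on' with
  | monomial u a =>
    set M : ℕ → ι → ℝ := fun k j => ∫ z, z ^ k ∂(gaussianReal (x j) (v j))
    have hsplit (w : ι →₀ ℕ) (b : ℝ) (hw : ∀ j ≠ i, w j = u j) :
        gaussianExpectation x v (monomial w b) =
          b * (M (w i) i * ∏ j ∈ univ.erase i, M (u j) j) := by
      rw [gaussianExpectation_monomial, ← mul_prod_erase _ _ (mem_univ i)]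
      congr 2
      exact prod_congr rfl fun j hj => by rw [hw j (ne_of_mem_erase hj)]
    rw [pderiv_monomial, X, monomial_mul, hsplit u a fun _ _ => rfl, hsplit, hsplit]
    · have hstein := integral_pow_succ_gaussianReal (x i) (v i) (u i)
      simp only [Finsupp.add_apply, Finsupp.tsub_apply, Finsupp.single_eq_same, one_mul,
        add_comm 1 (u i)]
      linear_combination a * (∏ j ∈ univ.erase i, M (u j) j) * hstein
    · intro j hj; simp [hj]
    · intro j hj; simp [hj]
  | add f g hf hg =>
    simp only [mul_add, map_add, hf, hg]
    ring

lemma gaussianExpectation_X (i : ι) : gaussianExpectation x v (X i) = x i := by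
  simpa [gaussianExpectation_one] using gaussianExpectation_X_mul x v i 1

lemma pderiv_psum_two_pow_succ {R : Type*} [CommSemiring R] (i : ι) (p : ℕ) :
    pderiv i (psum ι R 2 ^ (p + 1)) = (2 * (p + 1 : R)) • (X i * psum ι R 2 ^ p) := by
  have hpsum : pderiv i (psum ι R 2) = 2 * X i := by
    rw [psum, map_sum, sum_eq_single_of_mem i (mem_univ i) fun j _ hj => by
      rw [pderiv_pow, pderiv_X_of_ne hj, mul_zero], pderiv_pow, pderiv_X_self]
    simp
  rw [pderiv_pow, hpsum, smul_eq_C_mul]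
  simp only [map_mul, map_add, map_natCast, map_one, map_ofNat, Nat.add_sub_cancel]
  push_cast
  ring

variable (v : ℝ≥0)

lemma sum_mul_gaussianExpectation_X_mul_psum_two_pow_succ (p : ℕ) :
    ∑ i, x i * gaussianExpectation x (fun _ => v) (X i * psum ι ℝ 2 ^ (p + 1)) =
      (∑ i, x i ^ 2) * gaussianExpectation x (fun _ => v) (psum ι ℝ 2 ^ (p + 1)) +
        2 * (p + 1) * v *
          ∑ i, x i * gaussianExpectation x (fun _ => v) (X i * psum ι ℝ 2 ^ p) := by
  simp only [gaussianExpectation_X_mul x _ _ (psum ι ℝ 2 ^ (p + 1)), pderiv_psum_two_pow_succ,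
    map_smul, smul_eq_mul, sum_mul, mul_sum, ← sum_add_distrib]
  exact sum_congr rfl fun i _ => by ring

lemma gaussianExpectation_psum_two_pow_succ (p : ℕ) :
    gaussianExpectation x (fun _ => v) (psum ι ℝ 2 ^ (p + 1)) =
      ∑ i, x i * gaussianExpectation x (fun _ => v) (X i * psum ι ℝ 2 ^ p) +
        v * (Fintype.card ι + 2 * p) * gaussianExpectation x (fun _ => v) (psum ι ℝ 2 ^ p) := by
  have hexpand : psum ι ℝ 2 ^ (p + 1) = ∑ i, X i * (X i * psum ι ℝ 2 ^ p) := by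
    rw [pow_succ', psum, sum_mul]
    exact sum_congr rfl fun i _ => by ring
  have heuler : ∑ i, X i * pderiv i (psum ι ℝ 2 ^ p) = (2 * p) • psum ι ℝ 2 ^ p :=
    ((IsHomogeneous.sum univ _ 2 fun i _ => isHomogeneous_X_pow i 2).pow p).sum_X_mul_pderiv
  have heuler' := congrArg (gaussianExpectation x fun _ => v) heuler
  rw [map_sum, map_nsmul, nsmul_eq_mul] at heuler'
  rw [hexpand, map_sum]
  simp only [gaussianExpectation_X_mul x _ _ (X _ * _), pderiv_mul, pderiv_X_self, one_mul,
    map_add, sum_add_distrib, ← mul_sum, heuler', sum_const, card_univ, nsmul_eq_mul]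
  push_cast
  ring

/-- The mixed moment `E[(x · z)|z|^{2p}]` is `|x|²` times the `p`-th moment in dimension `n + 2`;
with this, the two Stein recursions are the two recursions of `noncentralChiSqMoment`. -/
lemma gaussianExpectation_psum_two_pow_and_mixed (p : ℕ) :
    gaussianExpectation x (fun _ => v) (psum ι ℝ 2 ^ p) =
        noncentralChiSqMoment (Fintype.card ι : ℝ) (∑ i, x i ^ 2) v p ∧
      ∑ i, x i * gaussianExpectation x (fun _ => v) (X i * psum ι ℝ 2 ^ p) =
        (∑ i, x i ^ 2) * noncentralChiSqMoment (Fintype.card ι + 2 : ℝ) (∑ i, x i ^ 2) v p := by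
  induction p with
  | zero =>
    simp only [pow_zero, mul_one, gaussianExpectation_X, gaussianExpectation_one,
      noncentralChiSqMoment_zero, sq, and_self]
  | succ p ih =>
    obtain ⟨hmoment, hmixed⟩ := ih
    have hmoment' : gaussianExpectation x (fun _ => v) (psum ι ℝ 2 ^ (p + 1)) =
        noncentralChiSqMoment (Fintype.card ι : ℝ) (∑ i, x i ^ 2) v (p + 1) := by
      rw [gaussianExpectation_psum_two_pow_succ, hmoment, hmixed, noncentralChiSqMoment_succ]
    refine ⟨hmoment', ?_⟩
    rw [sum_mul_gaussianExpectation_X_mul_psum_two_pow_succ, hmoment', hmixed,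
      noncentralChiSqMoment_add_two_succ]
    ring

lemma integrable_sum_sq_pow_gaussianReal_pi (p : ℕ) :
    Integrable (fun z : ι → ℝ => (∑ i, z i ^ 2) ^ p)
      (Measure.pi fun i => gaussianReal (x i) v) := by
  simpa [psum] using integrable_eval_gaussianReal_pi x (fun _ => v) (psum ι ℝ 2 ^ p)

lemma integral_sum_sq_pow_gaussianReal_pi (p : ℕ) :
    ∫ z, (∑ i, z i ^ 2) ^ p ∂(Measure.pi fun i => gaussianReal (x i) v) =
      noncentralChiSqMoment (Fintype.card ι : ℝ) (∑ i, x i ^ 2) v p := by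
  rw [← (gaussianExpectation_psum_two_pow_and_mixed x v p).1, gaussianExpectation_apply]
  simp [psum]

lemma map_const_sub_gaussianReal_pi :
    (Measure.pi fun _ : ι => gaussianReal 0 v).map (fun z => x - z) =
      Measure.pi fun i => gaussianReal (x i) v := by
  have h := Measure.pi_map_pi (μ := fun _ : ι => gaussianReal 0 v) (f := fun i (z : ℝ) => x i - z)
    fun i => by fun_prop
  simp only [gaussianReal_map_const_sub, sub_zero] at h
  exact h

lemma integrable_sum_const_sub_sq_pow_gaussianReal_pi (p : ℕ) :
    Integrable (fun z : ι → ℝ => (∑ i, (x i - z i) ^ 2) ^ p)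
      (Measure.pi fun _ => gaussianReal 0 v) := by
  have h := integrable_sum_sq_pow_gaussianReal_pi x v p
  rw [← map_const_sub_gaussianReal_pi] at h
  exact h.comp_measurable (by fun_prop)

lemma integral_sum_const_sub_sq_pow_gaussianReal_pi (p : ℕ) :
    ∫ z, (∑ i, (x i - z i) ^ 2) ^ p ∂(Measure.pi fun _ => gaussianReal 0 v) =
      noncentralChiSqMoment (Fintype.card ι : ℝ) (∑ i, x i ^ 2) v p := by
  rw [← integral_sum_sq_pow_gaussianReal_pi, ← map_const_sub_gaussianReal_pi x v,
    integral_map (by fun_prop)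
      (Measurable.aestronglyMeasurable (by fun_prop))]
  simp only [Pi.sub_apply]

end GaussianVector

section ConditionalCharFun

open Complex

variable {Ω E : Type*} {𝒢 𝒢' m : MeasurableSpace Ω} {P : Measure Ω}
  [NormedAddCommGroup E] [NormedSpace ℝ E] {X Y : Ω → E} {φ ψ : StrongDual ℝ E → ℂ}

/-- The random vector `X` has the deterministic conditional characteristic function `φ` given the
sub-σ-algebra `𝒢`, that is `E[exp(i L(X)) | 𝒢] = φ(L)` for every dual vector `L`. The conditional
expectation is encoded by testing against `𝒢`-measurable functions bounded by one. This expresses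
independence of `X` and `𝒢` in a form that passes to sums and to pointwise limits. -/
def HasCondCharFun (P : Measure Ω) (𝒢 : MeasurableSpace Ω) (X : Ω → E)
    (φ : StrongDual ℝ E → ℂ) : Prop :=
  ∀ g : Ω → ℂ, Measurable[𝒢] g → (∀ ω, ‖g ω‖ ≤ 1) → ∀ L : StrongDual ℝ E,
    ∫ ω, g ω * cexp (L (X ω) * I) ∂P = (∫ ω, g ω ∂P) * φ L

namespace HasCondCharFun

lemma zero (P : Measure Ω) (𝒢 : MeasurableSpace Ω) :
    HasCondCharFun P 𝒢 (fun _ => (0 : E)) 1 := by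
  intro g _ _ L
  simp

lemma const_smul (hX : HasCondCharFun P 𝒢 X φ) (c : ℝ) :
    HasCondCharFun P 𝒢 (fun ω => c • X ω) fun L => φ (c • L) := by
  intro g hg hg1 L
  simpa only [map_smul, smul_apply] using hX g hg hg1 (c • L)

variable [MeasurableSpace E] [BorelSpace E]

lemma of_indep (h𝒢 : 𝒢 ≤ m) (hX : Measurable X)
    (hindep : Indep (MeasurableSpace.comap X inferInstance) 𝒢 P) :
    HasCondCharFun P 𝒢 X (charFunDual (P.map X)) := by
  intro g hg _ L
  have hgX : IndepFun g X P :=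
    (IndepFun_iff_Indep ..).2 (indep_of_indep_of_le_left hindep.symm hg.comap_le)
  have hexp : Continuous fun z : E => cexp (L z * I) := by fun_prop
  rw [charFunDual_apply, integral_map hX.aemeasurable hexp.aestronglyMeasurable]
  exact hgX.integral_fun_comp_mul_comp (f := id) (hg.mono h𝒢 le_rfl).aemeasurable
    hX.aemeasurable measurable_id.aestronglyMeasurable hexp.aestronglyMeasurable

lemma add (hX : HasCondCharFun P 𝒢 X φ) (hY : HasCondCharFun P 𝒢' Y ψ) (h𝒢 : 𝒢 ≤ 𝒢')
    (hXm : Measurable[𝒢'] X) : HasCondCharFun P 𝒢 (fun ω => X ω + Y ω) (φ * ψ) := by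
  intro g hg hg1 L
  have hexp : Measurable fun z : E => cexp (L z * I) :=
    (by fun_prop : Continuous fun z : E => cexp (L z * I)).measurable
  have htower := hY (fun ω => g ω * cexp (L (X ω) * I))
    ((hg.mono h𝒢 le_rfl).mul (hexp.comp hXm))
    (fun ω => by rw [norm_mul, norm_exp_ofReal_mul_I, mul_one]; exact hg1 ω) L
  rw [Pi.mul_apply, ← mul_assoc, ← hX g hg hg1 L, ← htower]
  simp only [map_add, ofReal_add, add_mul, Complex.exp_add, mul_assoc]

lemma sum_range [SecondCountableTopology E] {𝒢 : ℕ → MeasurableSpace Ω} (h𝒢 : Monotone 𝒢)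
    {X : ℕ → Ω → E} {φ : ℕ → StrongDual ℝ E → ℂ} (hX : ∀ k, HasCondCharFun P (𝒢 k) (X k) (φ k))
    (hXm : ∀ k, Measurable[𝒢 (k + 1)] (X k)) (n : ℕ) :
    HasCondCharFun P (𝒢 0) (fun ω => ∑ k ∈ range n, X k ω) (∏ k ∈ range n, φ k) := by
  induction n with
  | zero => simpa only [range_zero, sum_empty, prod_empty] using zero P (𝒢 0)
  | succ n ih =>
    simp only [sum_range_succ, prod_range_succ]
    refine ih.add (hX n) (h𝒢 n.zero_le) (measurable_fun_sum _ fun k hk => ?_)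
    exact (hXm k).mono (h𝒢 (Nat.succ_le_of_lt (mem_range.1 hk))) le_rfl

lemma of_tendsto [IsFiniteMeasure P] (h𝒢 : 𝒢 ≤ m) {X : ℕ → Ω → E} {X' : Ω → E}
    {φ : ℕ → StrongDual ℝ E → ℂ} (hX : ∀ n, HasCondCharFun P 𝒢 (X n) (φ n))
    (hXm : ∀ n, Measurable (X n)) (hlim : ∀ ω, Tendsto (X · ω) atTop (𝓝 (X' ω)))
    (hφ : ∀ L, Tendsto (φ · L) atTop (𝓝 (ψ L))) : HasCondCharFun P 𝒢 X' ψ := by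
  intro g hg hg1 L
  have hexp : Continuous fun z : E => cexp (L z * I) := by fun_prop
  have hleft : Tendsto (fun n => ∫ ω, g ω * cexp (L (X n ω) * I) ∂P) atTop
      (𝓝 (∫ ω, g ω * cexp (L (X' ω) * I) ∂P)) := by
    refine tendsto_integral_of_dominated_convergence (fun _ => 1)
      (fun n => ((hg.mono h𝒢 le_rfl).mul (hexp.measurable.comp (hXm n))).aestronglyMeasurable)
      (integrable_const 1) (fun n => .of_forall fun ω => ?_) (.of_forall fun ω => ?_)
    · rw [norm_mul, norm_exp_ofReal_mul_I, mul_one]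
      exact hg1 ω
    · exact ((hexp.tendsto _).comp (hlim ω)).const_mul (g ω)
  refine tendsto_nhds_unique hleft (((hφ L).const_mul _).congr fun n => ?_)
  exact (hX n g hg hg1 L).symm

variable {μ : Measure E}

lemma map_eq [IsProbabilityMeasure P] [IsFiniteMeasure μ] [CompleteSpace E]
    [SecondCountableTopology E] (hX : HasCondCharFun P 𝒢 X (charFunDual μ)) (hXm : Measurable X) :
    P.map X = μ := by
  refine Measure.ext_of_charFunDual (funext fun L => ?_)
  have hexp : Continuous fun z : E => cexp (L z * I) := by fun_prop
  have h := hX (fun _ => 1) measurable_const (fun _ => by simp) L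
  rw [charFunDual_apply, integral_map hXm.aemeasurable hexp.aestronglyMeasurable]
  simpa using h

lemma indepFun {E' : Type*} [NormedAddCommGroup E'] [NormedSpace ℝ E'] [CompleteSpace E']
    [SecondCountableTopology E'] [MeasurableSpace E'] [BorelSpace E'] [IsProbabilityMeasure P]
    [IsFiniteMeasure μ] [CompleteSpace E] [SecondCountableTopology E]
    (hX : HasCondCharFun P 𝒢 X (charFunDual μ)) (hXm : Measurable X) (h𝒢 : 𝒢 ≤ m) {W : Ω → E'}
    (hW : Measurable[𝒢] W) : IndepFun W X P := by
  have hWm : Measurable W := hW.mono h𝒢 le_rfl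
  rw [indepFun_iff_charFunDual_prod hWm.aemeasurable hXm.aemeasurable, hX.map_eq hXm]
  intro L
  set L₁ := L.comp (.inl ℝ E' E)
  set L₂ := L.comp (.inr ℝ E' E)
  have hsplit (ω : Ω) : L (W ω, X ω) = L₁ (W ω) + L₂ (X ω) := by
    simp [L₁, L₂, ← map_add]
  have hexp : Continuous fun z : E' × E => cexp (L z * I) := by fun_prop
  have hexp₁ : Continuous fun z : E' => cexp (L₁ z * I) := by fun_prop
  have h := hX (fun ω => cexp (L₁ (W ω) * I)) (hexp₁.measurable.comp hW)
    (fun ω => (norm_exp_ofReal_mul_I _).le) L₂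
  rw [charFunDual_apply, charFunDual_apply,
    integral_map (hWm.prodMk hXm).aemeasurable hexp.aestronglyMeasurable,
    integral_map hWm.aemeasurable hexp₁.aestronglyMeasurable, ← h]
  simp only [hsplit, ofReal_add, add_mul, Complex.exp_add]

end HasCondCharFun

section GaussianCharFun

variable {ι : Type*} [Fintype ι] [DecidableEq ι]

/-- The characteristic function of the centered Gaussian law on `ι → ℝ` with covariance `r • Id`. -/
noncomputable def gaussianCharFun (r : ℝ) (L : StrongDual ℝ (ι → ℝ)) : ℂ :=
  cexp (-((∑ i, L (Pi.single i 1) ^ 2) / 2 * r : ℝ))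

lemma charFunDual_gaussianReal_pi (v : ℝ≥0) :
    charFunDual (Measure.pi fun _ : ι => gaussianReal 0 v) = gaussianCharFun v := by
  ext L
  have hcoord (i : ι) : charFunDual (gaussianReal 0 v) (L.comp (.single ℝ (fun _ => ℝ) i)) =
      cexp (-(L (Pi.single i 1) ^ 2 / 2 * v : ℝ)) := by
    have hL (z : ℝ) : L.comp (.single ℝ (fun _ => ℝ) i) z = L (Pi.single i 1) * z := by
      rw [mul_comm, ← smul_eq_mul, ← map_smul, ← Pi.single_smul]
      simp
    have h := charFun_gaussianReal (μ := 0) (v := v) (L (Pi.single i 1))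
    simp only [charFunDual_apply, hL, ofReal_mul, ← charFun_apply_real, h]
    congr 1
    push_cast
    ring
  rw [charFunDual_pi, prod_congr rfl fun i _ => hcoord i, ← Complex.exp_sum, gaussianCharFun]
  congr 1
  push_cast
  rw [sum_neg_distrib, sum_div, sum_mul]

lemma gaussianCharFun_smul (r c : ℝ) (L : StrongDual ℝ (ι → ℝ)) :
    gaussianCharFun r (c • L) = gaussianCharFun (c ^ 2 * r) L := by
  simp only [gaussianCharFun, smul_apply, smul_eq_mul, mul_pow, ← mul_sum]
  ring_nf

lemma prod_gaussianCharFun {κ : Type*} (s : Finset κ) (r : κ → ℝ) :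
    ∏ k ∈ s, gaussianCharFun (ι := ι) (r k) = gaussianCharFun (∑ k ∈ s, r k) := by
  ext L
  simp only [prod_apply, gaussianCharFun, ← Complex.exp_sum, sum_neg_distrib, mul_sum, ofReal_sum]

lemma continuous_gaussianCharFun (L : StrongDual ℝ (ι → ℝ)) :
    Continuous fun r => gaussianCharFun r L := by
  unfold gaussianCharFun
  fun_prop

end GaussianCharFun

end ConditionalCharFun

section RiemannSum

variable {E : Type*} [NormedAddCommGroup E] [NormedSpace ℝ E]

lemma norm_integral_smul_sub_integral_le [CompleteSpace E] {a b τ K ε : ℝ} (hab : a ≤ b)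
    {f : ℝ → ℝ} {h : ℝ → E} (hf : ContinuousOn f (Set.Icc a b)) (hh : ContinuousOn h (Set.Icc a b))
    (hK : ∀ s ∈ Set.Icc a b, ‖f s‖ ≤ K) (hε : ∀ s ∈ Set.Icc a b, ‖h τ - h s‖ ≤ ε) :
    ‖(∫ s in a..b, f s) • h τ - ∫ s in a..b, f s • h s‖ ≤ K * ε * (b - a) := by
  rw [← Set.uIcc_of_le hab] at hf hh hK hε
  have hf_int : IntervalIntegrable (fun s => f s • h τ) volume a b :=
    (hf.smul continuousOn_const).intervalIntegrable
  have hfh_int : IntervalIntegrable (fun s => f s • h s) volume a b :=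
    (hf.smul hh).intervalIntegrable
  rw [← intervalIntegral.integral_smul_const, ← intervalIntegral.integral_sub hf_int hfh_int,
    ← abs_of_nonneg (sub_nonneg.2 hab)]
  refine intervalIntegral.norm_integral_le_of_norm_le_const fun s hs => ?_
  have hs' := Set.uIoc_subset_uIcc hs
  rw [← smul_sub, norm_smul]
  exact mul_le_mul (hK s hs') (hε s hs') (norm_nonneg _) ((norm_nonneg _).trans (hK s hs'))

lemma norm_sum_integral_smul_sub_integral_le [CompleteSpace E] {σ τ : ℕ → ℝ} (hσ : Monotone σ)
    {n : ℕ} {K ε : ℝ} {f : ℝ → ℝ} {h : ℝ → E} (hf : ContinuousOn f (Set.Icc (σ 0) (σ n)))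
    (hh : ContinuousOn h (Set.Icc (σ 0) (σ n))) (hK : ∀ s ∈ Set.Icc (σ 0) (σ n), ‖f s‖ ≤ K)
    (hε : ∀ k < n, ∀ s ∈ Set.Icc (σ k) (σ (k + 1)), ‖h (τ k) - h s‖ ≤ ε) :
    ‖∑ k ∈ range n, (∫ s in σ k..σ (k + 1), f s) • h (τ k) - ∫ s in σ 0..σ n, f s • h s‖ ≤
      K * ε * (σ n - σ 0) := by
  have hsub : ∀ k < n, Set.Icc (σ k) (σ (k + 1)) ⊆ Set.Icc (σ 0) (σ n) := fun k hk =>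
    Set.Icc_subset_Icc (hσ k.zero_le) (hσ hk)
  have hint : ∀ k < n, IntervalIntegrable (fun s => f s • h s) volume (σ k) (σ (k + 1)) := by
    intro k hk
    refine ((hf.smul hh).mono ?_).intervalIntegrable
    rw [Set.uIcc_of_le (hσ k.le_succ)]
    exact hsub k hk
  rw [← intervalIntegral.sum_integral_adjacent_intervals hint, ← sum_sub_distrib,
    ← sum_range_sub σ n, mul_sum]
  refine norm_sum_le_of_le _ fun k hk => ?_
  have hk := mem_range.1 hk
  exact norm_integral_smul_sub_integral_le (hσ k.le_succ) (hf.mono (hsub k hk))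
    (hh.mono (hsub k hk)) (fun s hs => hK s (hsub k hk hs)) (hε k hk)

/-- The nodes `a = σ₀ ≤ ⋯ ≤ σₙ = b` of the partition of `[a, b]` into `n` intervals of equal
length. -/
noncomputable def uniformPartition (a b : ℝ) (n k : ℕ) : ℝ := a + (b - a) * (k / n)

@[simp]
lemma uniformPartition_zero (a b : ℝ) (n : ℕ) : uniformPartition a b n 0 = a := by
  simp [uniformPartition]

@[simp]
lemma uniformPartition_self (a b : ℝ) {n : ℕ} (hn : n ≠ 0) : uniformPartition a b n n = b := by
  simp [uniformPartition, hn]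

lemma uniformPartition_succ_sub (a b : ℝ) (n k : ℕ) :
    uniformPartition a b n (k + 1) - uniformPartition a b n k = (b - a) / n := by
  simp only [uniformPartition, Nat.cast_add, Nat.cast_one]
  ring

variable {a b : ℝ}

lemma monotone_uniformPartition (hab : a ≤ b) (n : ℕ) : Monotone (uniformPartition a b n) := by
  intro k l hkl
  have := sub_nonneg.2 hab
  unfold uniformPartition
  gcongr

lemma uniformPartition_mem_Icc (hab : a ≤ b) {n k : ℕ} (hn : n ≠ 0) (hk : k ≤ n) :
    uniformPartition a b n k ∈ Set.Icc a b := by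
  constructor
  · simpa using monotone_uniformPartition hab n k.zero_le
  · simpa only [uniformPartition_self a b hn] using monotone_uniformPartition hab n hk

lemma Icc_uniformPartition_subset (hab : a ≤ b) {n k : ℕ} (hk : k < n) :
    Set.Icc (uniformPartition a b n k) (uniformPartition a b n (k + 1)) ⊆ Set.Icc a b :=
  Set.Icc_subset_Icc (uniformPartition_mem_Icc hab (by omega) hk.le).1
    (uniformPartition_mem_Icc hab (by omega) hk).2

lemma tendsto_sum_integral_smul [CompleteSpace E] (hab : a ≤ b) {f : ℝ → ℝ} {h : ℝ → E}
    (hf : ContinuousOn f (Set.Icc a b)) (hh : ContinuousOn h (Set.Icc a b)) {τ : ℕ → ℕ → ℝ}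
    (hτ : ∀ n, ∀ k < n,
      τ n k ∈ Set.Icc (uniformPartition a b n k) (uniformPartition a b n (k + 1))) :
    Tendsto (fun n : ℕ => ∑ k ∈ range n,
        (∫ s in uniformPartition a b n k..uniformPartition a b n (k + 1), f s) • h (τ n k))
      atTop (𝓝 (∫ s in a..b, f s • h s)) := by
  obtain ⟨K, hK⟩ := isCompact_Icc.exists_bound_of_continuousOn hf
  have hK0 : 0 ≤ K * (b - a) := mul_nonneg ((norm_nonneg _).trans (hK a (Set.left_mem_Icc.2 hab)))
    (sub_nonneg.2 hab)
  rw [Metric.tendsto_atTop]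
  intro ε hε
  obtain ⟨δ, hδ, hδh⟩ := Metric.uniformContinuousOn_iff.1
    (isCompact_Icc.uniformContinuousOn_of_continuous hh) (ε / (K * (b - a) + 1)) (by positivity)
  obtain ⟨N, hN⟩ := eventually_atTop.1 (((tendsto_const_div_atTop_nhds_zero_nat (b - a)).eventually
    (gt_mem_nhds hδ)).and (eventually_ne_atTop 0))
  refine ⟨N, fun n hn => ?_⟩
  obtain ⟨hmesh, hn0⟩ := hN n hn
  have hosc : ∀ k < n, ∀ s ∈ Set.Icc (uniformPartition a b n k) (uniformPartition a b n (k + 1)),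
      ‖h (τ n k) - h s‖ ≤ ε / (K * (b - a) + 1) := by
    intro k hk s hs
    have hsub := Icc_uniformPartition_subset hab hk
    rw [← dist_eq_norm]
    refine (hδh _ (hsub (hτ n k hk)) _ (hsub hs) ?_).le
    refine (Real.dist_le_of_mem_Icc (hτ n k hk) hs).trans_lt ?_
    rwa [uniformPartition_succ_sub]
  have hle := norm_sum_integral_smul_sub_integral_le (monotone_uniformPartition hab n) (f := f)
    (K := K) (n := n) (τ := τ n) (by simpa [hn0]) (by simpa [hn0]) (by simpa [hn0] using hK) hosc
  rw [uniformPartition_zero, uniformPartition_self a b hn0] at hle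
  calc _ = _ := dist_eq_norm _ _
    _ ≤ K * (ε / (K * (b - a) + 1)) * (b - a) := hle
    _ = K * (b - a) / (K * (b - a) + 1) * ε := by ring
    _ < 1 * ε := by
      gcongr
      exact (div_lt_one (by positivity)).2 (lt_add_one _)
    _ = ε := one_mul ε

end RiemannSum

section WienerIntegral

variable {E : Type*} [NormedAddCommGroup E] [NormedSpace ℝ E] {a b : ℝ} {c : ℝ → ℝ}

/-- The Wiener integral `∫ₐᵇ c dw` of a continuously differentiable deterministic integrand `c`
along a continuous path `w`, defined pathwise by integration by parts. -/
noncomputable def wienerIntegral (c : ℝ → ℝ) (a b : ℝ) (w : ℝ → E) : E :=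
  c b • w b - c a • w a - ∫ s in a..b, deriv c s • w s

lemma integral_deriv_of_mem_Icc (hc : ∀ s ∈ Set.Icc a b, DifferentiableAt ℝ c s)
    (hc' : ContinuousOn (deriv c) (Set.Icc a b)) {r s : ℝ} (hr : r ∈ Set.Icc a b)
    (hs : s ∈ Set.Icc a b) : ∫ u in r..s, deriv c u = c s - c r :=
  have hsub : Set.uIcc r s ⊆ Set.Icc a b := Set.uIcc_subset_Icc hr hs
  intervalIntegral.integral_deriv_eq_sub (fun u hu => hc u (hsub hu))
    (hc'.mono hsub).intervalIntegrable

lemma tendsto_sum_smul_sub_wienerIntegral [CompleteSpace E] (hab : a ≤ b)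
    (hc : ∀ s ∈ Set.Icc a b, DifferentiableAt ℝ c s) (hc' : ContinuousOn (deriv c) (Set.Icc a b))
    {w : ℝ → E} (hw : ContinuousOn w (Set.Icc a b)) :
    Tendsto (fun n : ℕ => ∑ k ∈ range n, c (uniformPartition a b n k) •
        (w (uniformPartition a b n (k + 1)) - w (uniformPartition a b n k)))
      atTop (𝓝 (wienerIntegral c a b w)) := by
  have hlim := tendsto_sum_integral_smul hab hc' hw (τ := fun n k => uniformPartition a b n (k + 1))
    fun n k _ => Set.right_mem_Icc.2 (monotone_uniformPartition hab n k.le_succ)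
  refine (hlim.const_sub (c b • w b - c a • w a)).congr' ?_
  filter_upwards [eventually_ne_atTop 0] with n hn
  set σ := uniformPartition a b n with hσ
  have habel : ∀ k ∈ range n, (∫ s in σ k..σ (k + 1), deriv c s) • w (σ (k + 1)) =
      (c (σ (k + 1)) • w (σ (k + 1)) - c (σ k) • w (σ k)) -
        c (σ k) • (w (σ (k + 1)) - w (σ k)) := by
    intro k hk
    have hk := mem_range.1 hk
    rw [integral_deriv_of_mem_Icc hc hc' (uniformPartition_mem_Icc hab hn hk.le)
      (uniformPartition_mem_Icc hab hn hk), sub_smul, smul_sub]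
    abel
  rw [sum_congr rfl habel, sum_sub_distrib, sum_range_sub fun k => c (σ k) • w (σ k), hσ,
    uniformPartition_zero, uniformPartition_self a b hn, sub_sub_cancel]

lemma tendsto_sum_sq_mul_sub (hab : a ≤ b) (hc : ContinuousOn c (Set.Icc a b)) :
    Tendsto (fun n : ℕ => ∑ k ∈ range n, c (uniformPartition a b n k) ^ 2 *
        (uniformPartition a b n (k + 1) - uniformPartition a b n k))
      atTop (𝓝 (∫ s in a..b, c s ^ 2)) := by
  have hlim := tendsto_sum_integral_smul hab (f := fun _ => 1) continuousOn_const (hc.pow 2)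
    (τ := uniformPartition a b) fun n k _ =>
      Set.left_mem_Icc.2 (monotone_uniformPartition hab n k.le_succ)
  simpa [mul_comm] using hlim

end WienerIntegral

section BrownianIncrements

variable {Ω ι : Type*} [Fintype ι] {m : MeasurableSpace Ω} {P : Measure Ω} {F : Filtration ℝ m}
  {B : ℝ → Ω → ι → ℝ}

/-- `B` is adapted to `F` and its increments over `[s, t] ⊆ [0, ∞)` are independent of `F s` and
centered Gaussian with covariance `(t - s) • Id`. This is the part of the notion of Brownian motion
that involves neither the initial value nor the regularity of the paths and of the filtration. -/
structure HasBrownianIncrements (P : Measure Ω) (F : Filtration ℝ m) (B : ℝ → Ω → ι → ℝ) :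
    Prop where
  adapted (t : ℝ) : Measurable[F t] (B t)
  indepIncr {s t : ℝ} (hs : 0 ≤ s) (hst : s ≤ t) :
    Indep (MeasurableSpace.comap (fun ω => B t ω - B s ω) inferInstance) (F s) P
  gaussIncr {s t : ℝ} (hs : 0 ≤ s) (hst : s ≤ t) :
    P.map (fun ω => B t ω - B s ω) = Measure.pi fun _ => gaussianReal 0 (t - s).toNNReal

namespace HasBrownianIncrements

lemma of_isBrownianMotion {ν : ℕ} {B : ℝ → Ω → Fin ν → ℝ} (hB : IsBrownianMotion P ν F B) :
    HasBrownianIncrements P F B :=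
  ⟨hB.adapted, hB.indepIncr _ _, hB.gaussIncr _ _⟩

lemma measurable_sub (hB : HasBrownianIncrements P F B) {s t : ℝ} (hst : s ≤ t) :
    Measurable[F t] fun ω => B t ω - B s ω :=
  (hB.adapted t).sub ((hB.adapted s).mono (F.mono hst) le_rfl)

lemma hasCondCharFun_smul_sub [DecidableEq ι] (hB : HasBrownianIncrements P F B) {s t : ℝ}
    (hs : 0 ≤ s) (hst : s ≤ t) (c : ℝ) :
    HasCondCharFun P (F s) (fun ω => c • (B t ω - B s ω)) (gaussianCharFun (c ^ 2 * (t - s))) := by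
  have h := (HasCondCharFun.of_indep (F.le s) ((hB.measurable_sub hst).mono (F.le t) le_rfl)
    (hB.indepIncr hs hst)).const_smul c
  simpa only [hB.gaussIncr hs hst, charFunDual_gaussianReal_pi, gaussianCharFun_smul,
    Real.coe_toNNReal _ (sub_nonneg.2 hst)] using h

lemma hasCondCharFun_sum [DecidableEq ι] (hB : HasBrownianIncrements P F B) {σ : ℕ → ℝ}
    (hσ : Monotone σ) (hσ0 : 0 ≤ σ 0) (c : ℕ → ℝ) (n : ℕ) :
    HasCondCharFun P (F (σ 0)) (fun ω => ∑ k ∈ range n, c k • (B (σ (k + 1)) ω - B (σ k) ω))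
      (gaussianCharFun (∑ k ∈ range n, c k ^ 2 * (σ (k + 1) - σ k))) := by
  rw [← prod_gaussianCharFun]
  exact HasCondCharFun.sum_range (fun _ _ hkl => F.mono (hσ hkl))
    (fun k => hB.hasCondCharFun_smul_sub (hσ0.trans (hσ k.zero_le)) (hσ k.le_succ) (c k))
    (fun k => (hB.measurable_sub (hσ k.le_succ)).const_smul (c k)) n

lemma measurable_sum (hB : HasBrownianIncrements P F B) {σ : ℕ → ℝ} (hσ : Monotone σ) (c : ℕ → ℝ)
    (n : ℕ) :
    Measurable fun ω => ∑ k ∈ range n, c k • (B (σ (k + 1)) ω - B (σ k) ω) :=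
  Finset.measurable_fun_sum _ fun k _ =>
    ((hB.measurable_sub (hσ k.le_succ)).mono (F.le _) le_rfl).const_smul (c k)

variable {a b : ℝ} {c : ℝ → ℝ}

lemma measurable_wienerIntegral (hB : HasBrownianIncrements P F B) (hab : a ≤ b)
    (hc : ∀ s ∈ Set.Icc a b, DifferentiableAt ℝ c s) (hc' : ContinuousOn (deriv c) (Set.Icc a b))
    (hcont : ∀ ω, ContinuousOn (B · ω) (Set.Icc a b)) :
    Measurable fun ω => wienerIntegral c a b (B · ω) :=
  measurable_of_tendsto_metrizable
    (fun n => hB.measurable_sum (monotone_uniformPartition hab n)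
      (fun k => c (uniformPartition a b n k)) n)
    (tendsto_pi_nhds.2 fun ω => tendsto_sum_smul_sub_wienerIntegral hab hc hc' (hcont ω))

lemma hasCondCharFun_wienerIntegral [DecidableEq ι] [IsFiniteMeasure P]
    (hB : HasBrownianIncrements P F B) (ha : 0 ≤ a) (hab : a ≤ b)
    (hc : ∀ s ∈ Set.Icc a b, DifferentiableAt ℝ c s) (hc' : ContinuousOn (deriv c) (Set.Icc a b))
    (hcont : ∀ ω, ContinuousOn (B · ω) (Set.Icc a b)) :
    HasCondCharFun P (F a) (fun ω => wienerIntegral c a b (B · ω))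
      (gaussianCharFun (∫ s in a..b, c s ^ 2)) := by
  have hmono := monotone_uniformPartition hab
  refine HasCondCharFun.of_tendsto (F.le a) (fun n => ?_)
    (fun n => hB.measurable_sum (hmono n) (fun k => c (uniformPartition a b n k)) n)
    (fun ω => tendsto_sum_smul_sub_wienerIntegral hab hc hc' (hcont ω))
    fun L => ((continuous_gaussianCharFun L).tendsto _).comp
      (tendsto_sum_sq_mul_sub hab fun s hs => (hc s hs).continuousAt.continuousWithinAt)
  simpa only [uniformPartition_zero, Function.comp_apply] using
    hB.hasCondCharFun_sum (hmono n) (by rwa [uniformPartition_zero])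
      (fun k => c (uniformPartition a b n k)) n

lemma hasCondCharFun_wienerIntegral_charFunDual [IsFiniteMeasure P]
    (hB : HasBrownianIncrements P F B) (ha : 0 ≤ a) (hab : a ≤ b)
    (hc : ∀ s ∈ Set.Icc a b, DifferentiableAt ℝ c s) (hc' : ContinuousOn (deriv c) (Set.Icc a b))
    (hcont : ∀ ω, ContinuousOn (B · ω) (Set.Icc a b)) :
    HasCondCharFun P (F a) (fun ω => wienerIntegral c a b (B · ω))
      (charFunDual (Measure.pi fun _ => gaussianReal 0 (∫ s in a..b, c s ^ 2).toNNReal)) := by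
  classical
  have hnonneg : 0 ≤ ∫ s in a..b, c s ^ 2 :=
    intervalIntegral.integral_nonneg hab fun s _ => sq_nonneg (c s)
  rw [charFunDual_gaussianReal_pi, Real.coe_toNNReal _ hnonneg]
  exact hB.hasCondCharFun_wienerIntegral ha hab hc hc' hcont

lemma map_wienerIntegral [IsProbabilityMeasure P] (hB : HasBrownianIncrements P F B) (ha : 0 ≤ a)
    (hab : a ≤ b) (hc : ∀ s ∈ Set.Icc a b, DifferentiableAt ℝ c s)
    (hc' : ContinuousOn (deriv c) (Set.Icc a b)) (hcont : ∀ ω, ContinuousOn (B · ω) (Set.Icc a b)) :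
    P.map (fun ω => wienerIntegral c a b (B · ω)) =
      Measure.pi fun _ => gaussianReal 0 (∫ s in a..b, c s ^ 2).toNNReal :=
  (hB.hasCondCharFun_wienerIntegral_charFunDual ha hab hc hc' hcont).map_eq
    (hB.measurable_wienerIntegral hab hc hc' hcont)

lemma indepFun_wienerIntegral [IsProbabilityMeasure P] (hB : HasBrownianIncrements P F B)
    (ha : 0 ≤ a) (hab : a ≤ b) (hc : ∀ s ∈ Set.Icc a b, DifferentiableAt ℝ c s)
    (hc' : ContinuousOn (deriv c) (Set.Icc a b)) (hcont : ∀ ω, ContinuousOn (B · ω) (Set.Icc a b))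
    {W : Ω → ι → ℝ} (hW : Measurable[F a] W) :
    IndepFun W (fun ω => wienerIntegral c a b (B · ω)) P :=
  (hB.hasCondCharFun_wienerIntegral_charFunDual ha hab hc hc' hcont).indepFun
    (hB.measurable_wienerIntegral hab hc hc' hcont) (F.le a) hW

end HasBrownianIncrements

end BrownianIncrements

section IndependentGaussianShift

variable {Ω ι : Type*} [Fintype ι] {m : MeasurableSpace Ω} {P : Measure Ω} {p : ℕ}

lemma integrable_sum_sub_sq_pow [IsFiniteMeasure P] {q : Ω → ι → ℝ} (hq : Measurable q)
    (hint : Integrable (fun ω => (∑ i, q ω i ^ 2) ^ p) P) (y : ι → ℝ) {j : ℕ} (hj : j ≤ p) :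
    Integrable (fun ω => (∑ i, (q ω i - y i) ^ 2) ^ j) P := by
  have hnonneg (z : ι → ℝ) : 0 ≤ ∑ i, z i ^ 2 := sum_nonneg fun i _ => sq_nonneg _
  have hbound (ω : Ω) : ∑ i, (q ω i - y i) ^ 2 ≤ 2 * ∑ i, q ω i ^ 2 + 2 * ∑ i, y i ^ 2 := by
    rw [mul_sum, mul_sum, ← sum_add_distrib]
    exact sum_le_sum fun i _ => by linarith [sq_nonneg (q ω i + y i)]
  have hmeas : Measurable fun ω => ∑ i, (q ω i - y i) ^ 2 := by fun_prop
  have hnorm (k : ℕ) (ω : Ω) :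
      ‖∑ i, (q ω i - y i) ^ 2‖ ^ k = ‖(∑ i, (q ω i - y i) ^ 2) ^ k‖ := (norm_pow _ _).symm
  have hp : Integrable (fun ω => (∑ i, (q ω i - y i) ^ 2) ^ p) P := by
    refine (((hint.const_mul (2 ^ p)).add (integrable_const ((2 * ∑ i, y i ^ 2) ^ p))).const_mul
      (2 ^ (p - 1))).mono' (hmeas.pow_const p).aestronglyMeasurable (.of_forall fun ω => ?_)
    rw [Real.norm_of_nonneg (pow_nonneg (hnonneg fun i => q ω i - y i) p)]
    calc
      _ ≤ (2 * ∑ i, q ω i ^ 2 + 2 * ∑ i, y i ^ 2) ^ p :=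
        pow_le_pow_left₀ (hnonneg fun i => q ω i - y i) (hbound ω) p
      _ ≤ 2 ^ (p - 1) * ((2 * ∑ i, q ω i ^ 2) ^ p + (2 * ∑ i, y i ^ 2) ^ p) :=
        add_pow_le (mul_nonneg zero_le_two (hnonneg (q ω))) (mul_nonneg zero_le_two (hnonneg y)) p
      _ = _ := by rw [mul_pow]; rfl
  refine (integrable_norm_iff (hmeas.pow_const j).aestronglyMeasurable).1 ?_
  simpa only [hnorm] using
    integrable_norm_pow_of_le hmeas.aestronglyMeasurable hj (by simpa only [hnorm] using hp.norm)

lemma integrable_noncentralChiSqMoment {A : Ω → ℝ}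
    (hA : ∀ j ≤ p, Integrable (fun ω => A ω ^ j) P) (n v : ℝ) :
    Integrable (fun ω => noncentralChiSqMoment n (A ω) v p) P :=
  integrable_finsetSum _ fun _ hij =>
    (((hA _ (Nat.le.intro (mem_antidiagonal.1 hij))).const_mul _).mul_const _).const_mul _

lemma integral_noncentralChiSqMoment {A : Ω → ℝ}
    (hA : ∀ j ≤ p, Integrable (fun ω => A ω ^ j) P) (n v : ℝ) :
    ∫ ω, noncentralChiSqMoment n (A ω) v p ∂P = ∑ ij ∈ antidiagonal p,
      p.choose ij.1 * (stepTwoFactorial (n + 2 * ij.1) ij.2 * (∫ ω, A ω ^ ij.1 ∂P) * v ^ ij.2) := by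
  unfold noncentralChiSqMoment
  rw [integral_finsetSum _ fun _ hij =>
    (((hA _ (Nat.le.intro (mem_antidiagonal.1 hij))).const_mul _).mul_const _).const_mul _]
  simp only [integral_const_mul, integral_mul_const]

variable [IsProbabilityMeasure P] {W G : Ω → ι → ℝ} {v : ℝ≥0}

lemma integral_sum_sub_sq_pow_of_indepFun (hWG : IndepFun W G P) (hW : Measurable W)
    (hG : Measurable G) (hlaw : P.map G = Measure.pi fun _ => gaussianReal 0 v)
    (hint : ∀ j ≤ p, Integrable (fun ω => (∑ i, W ω i ^ 2) ^ j) P) :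
    ∫ ω, (∑ i, (W ω i - G ω i) ^ 2) ^ p ∂P =
      ∫ ω, noncentralChiSqMoment (Fintype.card ι : ℝ) (∑ i, W ω i ^ 2) v p ∂P := by
  set γ := Measure.pi fun _ : ι => gaussianReal 0 v
  have := Measure.isProbabilityMeasure_map (μ := P) hW.aemeasurable
  have hpair : P.map (fun ω => (W ω, G ω)) = (P.map W).prod γ := by
    rw [(indepFun_iff_map_prod_eq_prod_map_map hW.aemeasurable hG.aemeasurable).1 hWG, hlaw]
  set Φ : (ι → ℝ) × (ι → ℝ) → ℝ := fun z => (∑ i, (z.1 i - z.2 i) ^ 2) ^ p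
  have hΦ : Continuous Φ := by fun_prop
  have hΦ_nonneg (z) : 0 ≤ Φ z := by positivity
  have hinner (w : ι → ℝ) : ∫ z, Φ (w, z) ∂γ =
      noncentralChiSqMoment (Fintype.card ι : ℝ) (∑ i, w i ^ 2) v p :=
    integral_sum_const_sub_sq_pow_gaussianReal_pi w v p
  have hmoment : Continuous fun w : ι → ℝ =>
      noncentralChiSqMoment (Fintype.card ι : ℝ) (∑ i, w i ^ 2) v p := by
    unfold noncentralChiSqMoment
    fun_prop
  have hΦ_int : Integrable Φ ((P.map W).prod γ) := by
    refine (integrable_prod_iff hΦ.aestronglyMeasurable).2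
      ⟨.of_forall fun w => integrable_sum_const_sub_sq_pow_gaussianReal_pi w v p, ?_⟩
    simp only [Real.norm_of_nonneg (hΦ_nonneg _), hinner]
    exact (integrable_map_measure hmoment.aestronglyMeasurable hW.aemeasurable).2
      (integrable_noncentralChiSqMoment hint _ _)
  calc
    _ = ∫ z, Φ z ∂(P.map fun ω => (W ω, G ω)) :=
      (integral_map (hW.prodMk hG).aemeasurable hΦ.aestronglyMeasurable).symm
    _ = ∫ w, ∫ z, Φ (w, z) ∂γ ∂(P.map W) := by rw [hpair, integral_prod _ hΦ_int]
    _ = _ := by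
      simp only [hinner]
      exact integral_map hW.aemeasurable hmoment.aestronglyMeasurable

lemma integral_sum_sub_sq_pow_of_indepFun_eq_sum (hWG : IndepFun W G P) (hW : Measurable W)
    (hG : Measurable G) (hlaw : P.map G = Measure.pi fun _ => gaussianReal 0 v)
    (hint : ∀ j ≤ p, Integrable (fun ω => (∑ i, W ω i ^ 2) ^ j) P) :
    ∫ ω, (∑ i, (W ω i - G ω i) ^ 2) ^ p ∂P = ∑ ℓ ∈ range (p + 1),
      stepTwoFactorial (Fintype.card ι + 2 * (p - ℓ : ℕ) : ℝ) ℓ * p.choose ℓ *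
        (∫ ω, (∑ i, W ω i ^ 2) ^ (p - ℓ) ∂P) * v ^ ℓ := by
  rw [integral_sum_sub_sq_pow_of_indepFun hWG hW hG hlaw hint,
    integral_noncentralChiSqMoment hint, ← Nat.sum_antidiagonal_swap,
    Nat.sum_antidiagonal_eq_sum_range_succ_mk]
  refine sum_congr rfl fun ℓ hℓ => ?_
  simp only [Prod.fst_swap, Prod.snd_swap, Nat.choose_symm (mem_range_succ_iff.1 hℓ)]
  ring

end IndependentGaussianShift

section BrownianBridge

lemma deriv_inv_const_sub (T : ℝ) : deriv (fun s : ℝ => (T - s)⁻¹) = fun s => ((T - s) ^ 2)⁻¹ := by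
  ext s
  simp [deriv_comp_const_sub (fun s : ℝ => s⁻¹)]

variable {T a b : ℝ}

lemma differentiableAt_inv_const_sub {s : ℝ} (hs : s < T) :
    DifferentiableAt ℝ (fun s : ℝ => (T - s)⁻¹) s :=
  (differentiableAt_id.const_sub T).fun_inv (sub_pos.2 hs).ne'

lemma continuousOn_deriv_inv_const_sub (hb : b < T) :
    ContinuousOn (deriv fun s : ℝ => (T - s)⁻¹) (Set.Icc a b) := by
  rw [deriv_inv_const_sub]
  exact ContinuousOn.inv₀ (by fun_prop) fun s hs =>
    pow_ne_zero 2 (sub_pos.2 (hs.2.trans_lt hb)).ne'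

lemma integral_inv_const_sub_sq (hab : a ≤ b) (hb : b < T) :
    ∫ s in a..b, (T - s)⁻¹ ^ 2 = (T - b)⁻¹ - (T - a)⁻¹ := by
  have h := integral_deriv_of_mem_Icc
    (fun s hs => differentiableAt_inv_const_sub (hs.2.trans_lt hb))
    (continuousOn_deriv_inv_const_sub hb) (Set.left_mem_Icc.2 hab) (Set.right_mem_Icc.2 hab)
  simpa only [deriv_inv_const_sub, inv_pow] using h

lemma toNNReal_integral_inv_const_sub_sq {t : ℝ} (ht : 0 ≤ t) (htT : t < T) :
    ((∫ s in 0..t, (T - s)⁻¹ ^ 2).toNNReal : ℝ) = t / (T * (T - t)) := by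
  have hT : T ≠ 0 := (ht.trans_lt htT).ne'
  have hTt : T - t ≠ 0 := (sub_pos.2 htT).ne'
  rw [Real.coe_toNNReal _ (intervalIntegral.integral_nonneg ht fun s _ => sq_nonneg _),
    integral_inv_const_sub_sq ht htT, sub_zero]
  field_simp
  ring

lemma sum_inv_smul_sub_sq_pow {ι : Type*} [Fintype ι] (T : ℝ) (q y : ι → ℝ) (j : ℕ) :
    (∑ i, (T⁻¹ • (y - q)) i ^ 2) ^ j = (∑ i, (q i - y i) ^ 2) ^ j / T ^ (2 * j) := by
  rw [pow_mul, ← div_pow, sum_div]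
  congr! 2 with i
  simp only [Pi.smul_apply, Pi.sub_apply, smul_eq_mul]
  ring

lemma inv_smul_sub_bridgeBB {ν : ℕ} {t : ℝ} (hT : T ≠ 0) (htT : t < T) (q y : Fin ν → ℝ)
    {w : ℝ → Fin ν → ℝ} (hw : w 0 = 0) :
    (T - t)⁻¹ • (y - bridgeBB ν T q y w t) =
      T⁻¹ • (y - q) - wienerIntegral (fun s => (T - s)⁻¹) 0 t w := by
  have hTt : T - t ≠ 0 := (sub_pos.2 htT).ne'
  ext i
  simp only [bridgeBB, if_pos htT, wienerIntegral, deriv_inv_const_sub, hw, smul_zero, sub_zero,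
    Pi.smul_apply, Pi.sub_apply, Pi.add_apply, smul_eq_mul]
  field_simp
  ring

end BrownianBridge

end BridgeDrift

open BridgeDrift in
theorem statement9_general {Ω : Type*} [m : MeasurableSpace Ω] (P : Measure Ω)
    [IsProbabilityMeasure P] (ν : ℕ) (hν : 0 < ν) (F : Filtration ℝ m) (B : ℝ → Ω → Fin ν → ℝ)
    (hB : HasBrownianIncrements P F B) (hcont : ∀ ω, ContinuousOn (B · ω) (Set.Ici 0))
    (hstart : ∀ ω, B 0 ω = 0) (T : ℝ) (y : Fin ν → ℝ) (q : Ω → Fin ν → ℝ)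
    (hq : Measurable[F 0] q) (p : ℕ) (hmom : Integrable (fun ω => (∑ i, q ω i ^ 2) ^ p) P)
    (t : ℝ) (ht : t ∈ Set.Ico 0 T) :
    ∫ ω, (∑ i, ((T - t)⁻¹ • (y - bridgeBB ν T (q ω) y (fun s => B s ω) t)) i ^ 2) ^ p ∂P =
      ∑ ℓ ∈ Finset.range (p + 1),
        (dfacZ (2 * (p : ℤ) - 2 + (ν : ℤ)) /
            dfacZ (2 * ((p : ℤ) - (ℓ : ℤ)) - 2 + (ν : ℤ))) *
          (p.choose ℓ : ℝ) *
          ((∫ ω, (∑ i, (q ω i - y i) ^ 2) ^ (p - ℓ) ∂P) / T ^ (2 * (p - ℓ))) *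
          (t ^ ℓ / (T ^ ℓ * (T - t) ^ ℓ)) := by
  obtain ⟨ht0, htT⟩ := ht
  have hc : ∀ s ∈ Set.Icc 0 t, DifferentiableAt ℝ (fun s : ℝ => (T - s)⁻¹) s :=
    fun s hs => differentiableAt_inv_const_sub (hs.2.trans_lt htT)
  have hc' : ContinuousOn (deriv fun s : ℝ => (T - s)⁻¹) (Set.Icc 0 t) :=
    continuousOn_deriv_inv_const_sub htT
  have hcont' : ∀ ω, ContinuousOn (B · ω) (Set.Icc 0 t) :=
    fun ω => (hcont ω).mono Set.Icc_subset_Ici_self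
  have hW : Measurable[F 0] fun ω => T⁻¹ • (y - q ω) := (measurable_const.sub hq).const_smul T⁻¹
  have hdrift (ω : Ω) : (T - t)⁻¹ • (y - bridgeBB ν T (q ω) y (fun s => B s ω) t) =
      T⁻¹ • (y - q ω) - wienerIntegral (fun s => (T - s)⁻¹) 0 t (B · ω) :=
    inv_smul_sub_bridgeBB (ht0.trans_lt htT).ne' htT _ _ (hstart ω)
  simp_rw [hdrift, Pi.sub_apply]
  rw [integral_sum_sub_sq_pow_of_indepFun_eq_sum
    (hB.indepFun_wienerIntegral le_rfl ht0 hc hc' hcont' hW) (hW.mono (F.le 0) le_rfl)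
    (hB.measurable_wienerIntegral ht0 hc hc' hcont')
    (hB.map_wienerIntegral le_rfl ht0 hc hc' hcont')]
  · refine Finset.sum_congr rfl fun ℓ hℓ => ?_
    have hℓ := Finset.mem_range_succ_iff.1 hℓ
    have hratio := dfacZ_div_dfacZ hν (p - ℓ) ℓ
    rw [← Nat.cast_add, Nat.sub_add_cancel hℓ, Nat.cast_sub hℓ] at hratio
    simp only [sum_inv_smul_sub_sq_pow, integral_div, toNNReal_integral_inv_const_sub_sq ht0 htT,
      Fintype.card_fin, hratio, div_pow, mul_pow]
  · intro j hj
    simp only [sum_inv_smul_sub_sq_pow]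
    exact (integrable_sum_sub_sq_pow (hq.mono (F.le 0) le_rfl) hmom y hj).div_const _

/-- Explicit moment formula for the drift `Y_t = (y − b_t)/(T−t)` of the
Brownian bridge from the `ℱ₀`-measurable `q` (with all moments finite) to `y` in time `T`:
for `p ∈ ℕ` and `t ∈ [0,T)`,
`E[|Y_t|^{2p}] = ∑_{ℓ=0}^{p} ((2p−2+ν)‼/(2(p−ℓ)−2+ν)‼) (p choose ℓ)
(E[|q−y|^{2(p−ℓ)}]/T^{2(p−ℓ)}) tˡ/(Tˡ (T−t)ˡ)`, Euclidean norms written via sums of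
squares. -/
theorem statement9 {Ω : Type*} [m : MeasurableSpace Ω] (P : Measure Ω) [IsProbabilityMeasure P]
    (ν : ℕ) (hν : 0 < ν) (F : Filtration ℝ m) (B : ℝ → Ω → Fin ν → ℝ)
    (hB : IsBrownianMotion P ν F B) (T : ℝ) (hT : 0 < T) (y : Fin ν → ℝ)
    (q : Ω → Fin ν → ℝ) (hq : Measurable[F 0] q)
    (hmom : ∀ n : ℕ, Integrable (fun ω => Real.sqrt (∑ i, q ω i ^ 2) ^ n) P)
    (p : ℕ) (hp : 0 < p) (t : ℝ) (ht : t ∈ Set.Ico 0 T) :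
    ∫ ω, (∑ i, ((T - t)⁻¹ • (y - bridgeBB ν T (q ω) y (fun s => B s ω) t)) i ^ 2) ^ p ∂P =
      ∑ ℓ ∈ Finset.range (p + 1),
        (dfacZ (2 * (p : ℤ) - 2 + (ν : ℤ)) /
            dfacZ (2 * ((p : ℤ) - (ℓ : ℤ)) - 2 + (ν : ℤ))) *
          (p.choose ℓ : ℝ) *
          ((∫ ω, (∑ i, (q ω i - y i) ^ 2) ^ (p - ℓ) ∂P) / T ^ (2 * (p - ℓ))) *
          (t ^ ℓ / (T ^ ℓ * (T - t) ^ ℓ)) := by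
  have hmom' (n : ℕ) : Integrable (fun ω => (∑ i, q ω i ^ 2) ^ n) P := by
    simpa only [pow_mul, Real.sq_sqrt (Finset.sum_nonneg fun _ _ => sq_nonneg _)] using hmom (2 * n)
  exact statement9_general P ν hν F B (.of_isBrownianMotion hB) hB.contPaths hB.start T y q hq p
    (hmom' p) t ht
end
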